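/- arXiv:1008.4617 — 8 statements merged into one kernel-verified Lean document; each statement's English description precedes it below -/
import Mathlib

section
/- Let h ∈ C₀(ℤ, ℝ) satisfy h n > 0 for every n ∈ ℤ (equivalently, h is a strictly positive element of the C*-algebra c₀(ℤ)). Then the closure in C₀(ℤ, ℂ) of the h-compressed unit ball, namely of the set { b ∈ C₀(ℤ, ℂ) | ∃ a ∈ C₀(ℤ, ℂ), ‖a‖ ≤ 1 and b n = (h n)^2 * a n for all n }, is compact. -/
open scoped ZeroAtInfty

/-!
Multiplication by a weight `w` vanishing at infinity sends the unit ball into the set of functions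
dominated by `‖w‖`. On a family dominated by a function vanishing at infinity, only finitely many
coordinates matter up to `ε`, so pointwise convergence is uniform. Over a discrete space such a
dominated set is therefore compact, by Tychonoff's theorem applied to the product of closed balls.
-/

open Filter Topology

section Dominated

variable {α E : Type*} [SeminormedAddCommGroup E] {g : α → ℝ}

theorem tendstoUniformly_of_norm_le {ι : Type*} {l : Filter ι} {F : ι → α → E} {f : α → E}
    (hg : Tendsto g cofinite (𝓝 0)) (hFg : ∀ᶠ i in l, ∀ x, ‖F i x‖ ≤ g x)
    (hfg : ∀ x, ‖f x‖ ≤ g x) (hFf : ∀ x, Tendsto (F · x) l (𝓝 (f x))) :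
    TendstoUniformly F f l := by
  rw [Metric.tendstoUniformly_iff]
  intro ε hε
  have finite_large : {x | ¬ g x < ε / 2}.Finite :=
    eventually_cofinite.mp (hg.eventually_lt_const (half_pos hε))
  have close_on_large : ∀ᶠ i in l, ∀ x ∈ {x | ¬ g x < ε / 2}, dist (f x) (F i x) < ε := by
    refine (eventually_all_finite finite_large).mpr fun x _ ↦ ?_
    simpa only [dist_comm] using Metric.tendsto_nhds.mp (hFf x) ε hε
  filter_upwards [hFg, close_on_large] with i hi hclose x
  by_cases hx : g x < ε / 2
  · calc
      dist (f x) (F i x) ≤ ‖f x‖ + ‖F i x‖ := dist_le_norm_add_norm _ _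
      _ ≤ g x + g x := add_le_add (hfg x) (hi x)
      _ < ε := by linarith
  · exact hclose x hx

variable [TopologicalSpace α] [DiscreteTopology α] [ProperSpace E]

theorem isCompact_setOf_forall_norm_le (hg : Tendsto g cofinite (𝓝 0)) :
    IsCompact {f : C₀(α, E) | ∀ x, ‖f x‖ ≤ g x} := by
  rw [isCompact_iff_ultrafilter_le_nhds']
  intro 𝓤 h𝓤
  have isCompact_pi : IsCompact (Set.univ.pi fun x ↦ Metric.closedBall (0 : E) (g x)) :=
    isCompact_univ_pi fun x ↦ isCompact_closedBall 0 (g x)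
  obtain ⟨φ, hφ, h𝓤φ⟩ := isCompact_pi.ultrafilter_le_nhds' (𝓤.map (⇑)) <|
    Ultrafilter.mem_map.mpr <| mem_of_superset h𝓤 fun _ hf x _ ↦
      mem_closedBall_zero_iff.mpr (hf x)
  have hφg : ∀ x, ‖φ x‖ ≤ g x := fun x ↦ mem_closedBall_zero_iff.mp (hφ x trivial)
  let f : C₀(α, E) :=
    { toFun := φ
      continuous_toFun := continuous_of_discreteTopology
      zero_at_infty' := squeeze_zero_norm hφg (by rwa [cocompact_eq_cofinite]) }
  have tendsto_f : Tendsto id (𝓤 : Filter C₀(α, E)) (𝓝 f) :=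
    ZeroAtInftyContinuousMap.tendsto_iff_tendstoUniformly.mpr <|
      tendstoUniformly_of_norm_le hg h𝓤 hφg (tendsto_pi_nhds.mp h𝓤φ)
  exact ⟨f, hφg, tendsto_f⟩

end Dominated

theorem isCompact_closure_compressed_unitBall_general {α 𝕜 E : Type*} [TopologicalSpace α]
    [DiscreteTopology α] [SeminormedRing 𝕜] [SeminormedAddCommGroup E] [ProperSpace E]
    [Module 𝕜 E] [IsBoundedSMul 𝕜 E] (w : C₀(α, 𝕜)) :
    IsCompact (closure {b : C₀(α, E) | ∃ a : C₀(α, E), ‖a‖ ≤ 1 ∧ ∀ x, b x = w x • a x}) := by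
  have tendsto_norm_w : Tendsto (fun x ↦ ‖w x‖) cofinite (𝓝 0) := by
    simpa only [cocompact_eq_cofinite, norm_zero] using (zero_at_infty w).norm
  refine (isCompact_setOf_forall_norm_le tendsto_norm_w).closure_of_subset ?_
  rintro b ⟨a, ha, hb⟩ x
  calc
    ‖b x‖ = ‖w x • a x‖ := by rw [hb]
    _ ≤ ‖w x‖ * ‖a x‖ := norm_smul_le _ _
    _ ≤ ‖w x‖ := mul_le_of_le_one_right (norm_nonneg _) ((a.toBCF.norm_coe_le_norm x).trans ha)

/-- if `h ∈ C₀(ℤ, ℝ)` is strictly positive pointwise, then the closure of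
the `h`-compressed unit ball `{ b | ∃ a, ‖a‖ ≤ 1 ∧ b n = (h n)^2 * a n }` is compact
in `C₀(ℤ, ℂ)`. -/
theorem isCompact_closure_compressed_unitBall (h : C₀(ℤ, ℝ)) (hpos : ∀ n : ℤ, 0 < h n) :
    IsCompact (closure {b : C₀(ℤ, ℂ) | ∃ a : C₀(ℤ, ℂ), ‖a‖ ≤ 1 ∧
      ∀ n : ℤ, b n = ((h n : ℂ) ^ 2) * a n}) := by
  simpa [sq] using isCompact_closure_compressed_unitBall_general (E := ℂ) (h * h)
end

section
/- Let d be a metric on ℤ and let B = { a ∈ C₀(ℤ, ℂ) | ∀ n ∈ ℤ, ‖a n − a (n − 1)‖ ≤ d n (n − 1) } be the Lipschitz ball of consecutive differences. Then B is compact in C₀(ℤ, ℂ) if and only if the family (fun n : ℤ => d n (n − 1)) is summable. -/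
open scoped ZeroAtInfty

/-!
Write `c n = d n (n - 1)`. If `c` is summable, telescoping from `n` towards `+∞` and towards `-∞`
bounds `‖a n‖`, for every `a` in the ball, by both tails of `∑ c`. The smaller of the two tails
tends to `0` at both ends of `ℤ`, and a closed subset of `C₀` dominated by a single function
vanishing at infinity is compact.

If `c` is not summable on one half-line, say the positive one, the partial sums `T` of `c` tend
to `+∞` there. Composing `T` with a triangular bump of height `h` supported in `[0, 2h]` gives
elements of the ball of arbitrarily large norm, so the ball is unbounded.
-/

open Filter Topology Set

theorem continuous_zeroAtInfty_apply {α β : Type*} [TopologicalSpace α] [PseudoMetricSpace β]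
    [Zero β] (x : α) : Continuous fun a : C₀(α, β) => a x :=
  (continuous_eval_const (F := BoundedContinuousFunction α β) x).comp
    ZeroAtInftyContinuousMap.isometry_toBCF.continuous

section DominatedSets

variable {α ι E : Type*} [TopologicalSpace α] [DiscreteTopology α] [NormedAddCommGroup E]
  {g : α → ℝ}

theorem zeroAtInfty_tendsto_of_dominated {l : Filter ι} {F : ι → C₀(α, E)} {a : C₀(α, E)}
    (hg : Tendsto g cofinite (𝓝 0)) (hF : ∀ᶠ i in l, ∀ x, ‖F i x‖ ≤ g x)
    (hlim : ∀ x, Tendsto (fun i => F i x) l (𝓝 (a x))) : Tendsto F l (𝓝 a) := by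
  rw [ZeroAtInftyContinuousMap.tendsto_iff_tendstoUniformly, Metric.tendstoUniformly_iff]
  intro ε hε
  have ha : Tendsto a cofinite (𝓝 0) := cocompact_eq_cofinite α ▸ zero_at_infty a
  have hsum : Tendsto (fun x => ‖a x‖ + g x) cofinite (𝓝 0) := by
    simpa using ha.norm.add hg
  have hsmall : ∀ᶠ x in cofinite, ‖a x‖ + g x < ε := hsum.eventually_lt_const hε
  have hnear : ∀ᶠ i in l, ∀ x ∈ {x | ¬ ‖a x‖ + g x < ε}, dist (a x) (F i x) < ε :=
    (eventually_all_finite hsmall).2 fun x _ =>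
      (Metric.tendsto_nhds.1 (hlim x) ε hε).mono fun i hi => by rwa [dist_comm]
  filter_upwards [hF, hnear] with i hbound hnear x
  by_cases hx : ‖a x‖ + g x < ε
  · calc dist (a x) (F i x) ≤ ‖a x‖ + ‖F i x‖ := dist_le_norm_add_norm _ _
      _ ≤ ‖a x‖ + g x := by gcongr; exact hbound x
      _ < ε := hx
  · exact hnear x hx

theorem isCompact_setOf_forall_norm_apply_le [ProperSpace E] (hg : Tendsto g cofinite (𝓝 0)) :
    IsCompact {a : C₀(α, E) | ∀ x, ‖a x‖ ≤ g x} := by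
  rw [isCompact_iff_ultrafilter_le_nhds]
  intro 𝒰 h𝒰
  have hbound : ∀ᶠ a : C₀(α, E) in 𝒰, ∀ x, ‖a x‖ ≤ g x := le_principal_iff.1 h𝒰
  have hpi : IsCompact (univ.pi fun x => Metric.closedBall (0 : E) (g x)) :=
    isCompact_univ_pi fun x => isCompact_closedBall _ _
  obtain ⟨f, hf, hlim⟩ := isCompact_iff_ultrafilter_le_nhds.1 hpi (𝒰.map (⇑)) <|
    le_principal_iff.2 <| hbound.mono fun a ha x _ => mem_closedBall_zero_iff.2 (ha x)
  have hfg : ∀ x, ‖f x‖ ≤ g x := fun x => mem_closedBall_zero_iff.1 (hf x (mem_univ x))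
  let a : C₀(α, E) := ⟨⟨f, continuous_of_discreteTopology⟩,
    cocompact_eq_cofinite α ▸ squeeze_zero_norm hfg hg⟩
  exact ⟨a, hfg, zeroAtInfty_tendsto_of_dominated hg hbound (tendsto_pi_nhds.1 hlim)⟩

end DominatedSets

section Tails

theorem tendsto_tsum_subtype_zero {ι β F : Type*} [NormedAddCommGroup F] [CompleteSpace F]
    {f : ι → F} (hf : Summable fun i => ‖f i‖) {s : β → Set ι} {l : Filter β}
    (hs : ∀ i, ∀ᶠ b in l, i ∉ s b) : Tendsto (fun b => ∑' i : s b, f i) l (𝓝 0) := by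
  simp_rw [tsum_subtype]
  have hpointwise : ∀ i, Tendsto (fun b => (s b).indicator f i) l (𝓝 0) := fun i =>
    tendsto_const_nhds.congr' <| (hs i).mono fun b hb => (indicator_of_notMem hb f).symm
  simpa using tendsto_tsum_of_dominated_convergence hf hpointwise
    (Eventually.of_forall fun b i => norm_indicator_le_norm_self f i)

theorem sum_le_tsum_subtype_of_subset {ι : Type*} {c : ι → ℝ} (hc : ∀ i, 0 ≤ c i)
    (hsum : Summable c) {s : Finset ι} {t : Set ι} (hst : ↑s ⊆ t) :
    ∑ i ∈ s, c i ≤ ∑' i : t, c i :=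
  calc ∑ i ∈ s, c i = ∑ i ∈ s, t.indicator c i :=
        Finset.sum_congr rfl fun _ hi => (indicator_of_mem (hst hi) c).symm
    _ ≤ ∑' i, t.indicator c i :=
        (hsum.indicator t).sum_le_tsum s fun i _ => indicator_nonneg (fun i _ => hc i) i
    _ = ∑' i : t, c i := (tsum_subtype t c).symm

theorem tendsto_min_tsum_Iic_tsum_Ioi_cofinite {c : ℤ → ℝ} (hc : ∀ n, 0 ≤ c n)
    (hsum : Summable c) :
    Tendsto (fun n : ℤ => min (∑' k : Iic n, c k) (∑' k : Ioi n, c k)) cofinite (𝓝 0) := by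
  have hleft : Tendsto (fun n : ℤ => ∑' k : Iic n, c k) atBot (𝓝 0) :=
    tendsto_tsum_subtype_zero hsum.norm fun k => (eventually_lt_atBot k).mono fun _ => not_le.2
  have hright : Tendsto (fun n : ℤ => ∑' k : Ioi n, c k) atTop (𝓝 0) :=
    tendsto_tsum_subtype_zero hsum.norm fun k => (eventually_ge_atTop k).mono fun _ => not_lt.2
  have hnonneg : ∀ n : ℤ, 0 ≤ min (∑' k : Iic n, c k) (∑' k : Ioi n, c k) := fun n =>
    le_min (tsum_nonneg fun k => hc k) (tsum_nonneg fun k => hc k)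
  rw [Int.cofinite_eq]
  exact (squeeze_zero hnonneg (fun n => min_le_left _ _) hleft).sup
    (squeeze_zero hnonneg (fun n => min_le_right _ _) hright)

end Tails

section Telescoping

variable {E : Type*} [SeminormedAddCommGroup E] {f : ℤ → E} {c : ℤ → ℝ}

theorem norm_sub_le_sum_Ioc (hf : ∀ n, ‖f n - f (n - 1)‖ ≤ c n) {m n : ℤ} (hmn : m ≤ n) :
    ‖f n - f m‖ ≤ ∑ k ∈ Finset.Ioc m n, c k := by
  induction n, hmn using Int.leInduction with
  | base => simp
  | succ n hmn ih =>
    have hstep : ‖f (n + 1) - f n‖ ≤ c (n + 1) := by simpa using hf (n + 1)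
    rw [← Finset.insert_Ioc_right_eq_Ioc_add_one hmn, Finset.sum_insert (by simp)]
    exact (norm_sub_le_norm_sub_add_norm_sub _ (f n) _).trans (add_le_add hstep ih)

theorem norm_le_tsum_Ioi (hf : ∀ n, ‖f n - f (n - 1)‖ ≤ c n) (hsum : Summable c)
    (hlim : Tendsto f atTop (𝓝 0)) (n : ℤ) : ‖f n‖ ≤ ∑' k : Ioi n, c k := by
  have hc : ∀ n, 0 ≤ c n := fun n => (norm_nonneg _).trans (hf n)
  have hnorm : Tendsto (fun m => ‖f m - f n‖) atTop (𝓝 ‖f n‖) := by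
    simpa using (hlim.sub_const (f n)).norm
  refine le_of_tendsto hnorm <| (eventually_ge_atTop n).mono fun m hnm => ?_
  exact (norm_sub_le_sum_Ioc hf hnm).trans <|
    sum_le_tsum_subtype_of_subset hc hsum fun k hk => (Finset.mem_Ioc.1 hk).1

theorem norm_le_tsum_Iic (hf : ∀ n, ‖f n - f (n - 1)‖ ≤ c n) (hsum : Summable c)
    (hlim : Tendsto f atBot (𝓝 0)) (n : ℤ) : ‖f n‖ ≤ ∑' k : Iic n, c k := by
  have hc : ∀ n, 0 ≤ c n := fun n => (norm_nonneg _).trans (hf n)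
  have hnorm : Tendsto (fun m => ‖f n - f m‖) atBot (𝓝 ‖f n‖) := by
    simpa using (hlim.const_sub (f n)).norm
  refine le_of_tendsto hnorm <| (eventually_le_atBot n).mono fun m hmn => ?_
  exact (norm_sub_le_sum_Ioc hf hmn).trans <|
    sum_le_tsum_subtype_of_subset hc hsum fun k hk => (Finset.mem_Ioc.1 hk).2

end Telescoping

section Tent

/-- The triangular bump of height `h` supported in `[0, 2h]`, used to cut off partial sums
without increasing their increments. For `h ≤ 0` it is identically `0`. -/
def tent (h t : ℝ) : ℝ := max (h - |t - h|) 0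

theorem tent_self {h : ℝ} (hh : 0 ≤ h) : tent h h = h := by
  simp [tent, hh]

theorem tent_of_nonpos {h t : ℝ} (ht : t ≤ 0) : tent h t = 0 :=
  max_eq_right <| by linarith [neg_abs_le (t - h)]

theorem tent_of_two_mul_le {h t : ℝ} (ht : 2 * h ≤ t) : tent h t = 0 :=
  max_eq_right <| by linarith [le_abs_self (t - h)]

theorem abs_tent_sub_tent_le (h s t : ℝ) : |tent h s - tent h t| ≤ |s - t| :=
  calc |tent h s - tent h t|
      ≤ |(h - |s - h|) - (h - |t - h|)| := abs_sup_sub_sup_le_abs _ _ _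
    _ = |(|t - h| - |s - h|)| := by congr 1; ring
    _ ≤ |(t - h) - (s - h)| := abs_abs_sub_abs_le_abs_sub _ _
    _ = |s - t| := by rw [sub_sub_sub_cancel_right, abs_sub_comm]

end Tent

section ConsecutiveLipschitzBall

variable {E : Type*} [NormedAddCommGroup E] {c : ℤ → ℝ}

/-- The Lipschitz ball of consecutive differences in `C₀(ℤ, E)`, with the distances
`d n (n - 1)` replaced by an arbitrary weight `c n`. -/
def consecutiveLipschitzBall (E : Type*) [NormedAddCommGroup E] (c : ℤ → ℝ) : Set C₀(ℤ, E) :=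
  {a | ∀ n, ‖a n - a (n - 1)‖ ≤ c n}

theorem isClosed_consecutiveLipschitzBall : IsClosed (consecutiveLipschitzBall E c) := by
  simp only [consecutiveLipschitzBall, ofPred_forall]
  exact isClosed_iInter fun n =>
    isClosed_le ((continuous_zeroAtInfty_apply n).sub
      (continuous_zeroAtInfty_apply (n - 1))).norm continuous_const

theorem norm_apply_le_min_tsum_of_mem_consecutiveLipschitzBall {a : C₀(ℤ, E)}
    (ha : a ∈ consecutiveLipschitzBall E c) (hsum : Summable c) (n : ℤ) :
    ‖a n‖ ≤ min (∑' k : Iic n, c k) (∑' k : Ioi n, c k) := by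
  have hlim : Tendsto a (atBot ⊔ atTop) (𝓝 0) := by
    rw [← Int.cofinite_eq, ← cocompact_eq_cofinite]
    exact zero_at_infty a
  exact le_min (norm_le_tsum_Iic ha hsum (hlim.mono_left le_sup_left) n)
    (norm_le_tsum_Ioi ha hsum (hlim.mono_left le_sup_right) n)

theorem isCompact_consecutiveLipschitzBall_of_summable [ProperSpace E] (hc : ∀ n, 0 ≤ c n)
    (hsum : Summable c) : IsCompact (consecutiveLipschitzBall E c) :=
  (isCompact_setOf_forall_norm_apply_le
    (tendsto_min_tsum_Iic_tsum_Ioi_cofinite hc hsum)).of_isClosed_subset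
    isClosed_consecutiveLipschitzBall fun _ ha n =>
      norm_apply_le_min_tsum_of_mem_consecutiveLipschitzBall ha hsum n

theorem comp_neg_mem_consecutiveLipschitzBall {a : C₀(ℤ, E)}
    (ha : a ∈ consecutiveLipschitzBall E fun n => c (1 - n)) :
    a.comp (Homeomorph.neg ℤ).toCocompactMap ∈ consecutiveLipschitzBall E c := by
  intro n
  change ‖a (-n) - a (-(n - 1))‖ ≤ c n
  have hstep : ‖a (1 - n) - a (1 - n - 1)‖ ≤ c (1 - (1 - n)) := ha (1 - n)
  rw [sub_sub_cancel, sub_sub_cancel_left] at hstep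
  rwa [neg_sub, norm_sub_rev]

variable [NormedSpace ℝ E] [Nontrivial E]

theorem exists_mem_consecutiveLipschitzBall_lt_norm_apply {T : ℤ → ℝ}
    (hT : ∀ n, |T n - T (n - 1)| ≤ c n) (hbot : ∀ᶠ n in atBot, T n ≤ 0)
    (htop : Tendsto T atTop atTop) (R : ℝ) :
    ∃ a ∈ consecutiveLipschitzBall E c, ∃ n, R < ‖a n‖ := by
  obtain ⟨v, hv⟩ := exists_norm_eq E zero_le_one
  obtain ⟨m, hRm, hm⟩ := ((htop.eventually_gt_atTop R).and (htop.eventually_ge_atTop 0)).exists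
  have hzero : Tendsto (fun n => tent (T m) (T n) • v) (cocompact ℤ) (𝓝 0) := by
    rw [cocompact_eq_cofinite, Int.cofinite_eq]
    refine tendsto_const_nhds.congr' (eventually_sup.2 ⟨?_, ?_⟩)
    · filter_upwards [hbot] with n hn
      rw [tent_of_nonpos hn, zero_smul]
    · filter_upwards [htop.eventually_ge_atTop (2 * T m)] with n hn
      rw [tent_of_two_mul_le hn, zero_smul]
  refine ⟨⟨⟨fun n => tent (T m) (T n) • v, continuous_of_discreteTopology⟩, hzero⟩, ?_, m, ?_⟩
  · intro n
    change ‖tent (T m) (T n) • v - tent (T m) (T (n - 1)) • v‖ ≤ c n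
    rw [← sub_smul, norm_smul, hv, mul_one, Real.norm_eq_abs]
    exact (abs_tent_sub_tent_le _ _ _).trans (hT n)
  · change R < ‖tent (T m) (T m) • v‖
    rwa [tent_self hm, norm_smul, hv, mul_one, Real.norm_of_nonneg hm]

theorem summable_nat_add_one_of_forall_norm_apply_le (hc : ∀ n, 0 ≤ c n) {R : ℝ}
    (hR : ∀ a ∈ consecutiveLipschitzBall E c, ∀ n, ‖a n‖ ≤ R) :
    Summable fun k : ℕ => c (k + 1) := by
  by_contra hdiv
  rw [not_summable_iff_tendsto_nat_atTop_of_nonneg fun k => hc _] at hdiv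
  let T : ℤ → ℝ := fun n => ∑ i ∈ Finset.range n.toNat, c (i + 1)
  have hT : ∀ n, |T n - T (n - 1)| ≤ c n := by
    intro n
    rcases le_or_gt n 0 with hn | hn
    · simpa [T, Int.toNat_of_nonpos hn, Int.toNat_of_nonpos (show n - 1 ≤ 0 by lia)] using hc n
    · obtain ⟨k, rfl⟩ : ∃ k : ℕ, n = k + 1 := ⟨(n - 1).toNat, by lia⟩
      simp [T, Finset.sum_range_succ, abs_of_nonneg (hc _)]
  have hbot : ∀ᶠ n in atBot, T n ≤ 0 :=
    (eventually_le_atBot 0).mono fun n hn => by simp [T, Int.toNat_of_nonpos hn]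
  have htop : Tendsto T atTop atTop := hdiv.comp <|
    tendsto_atTop.2 fun k => (eventually_ge_atTop (k : ℤ)).mono fun n hn => by lia
  obtain ⟨a, ha, n, hn⟩ := exists_mem_consecutiveLipschitzBall_lt_norm_apply (E := E) hT hbot htop R
  exact hn.not_ge (hR a ha n)

theorem summable_of_isBounded_consecutiveLipschitzBall (hc : ∀ n, 0 ≤ c n)
    (hbdd : Bornology.IsBounded (consecutiveLipschitzBall E c)) : Summable c := by
  obtain ⟨R, hR⟩ := hbdd.exists_norm_le
  have happly : ∀ a ∈ consecutiveLipschitzBall E c, ∀ n, ‖a n‖ ≤ R := fun a ha n =>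
    (a.toBCF.norm_coe_le_norm n).trans (hR a ha)
  have hpos : Summable fun k : ℕ => c (k + 1) :=
    summable_nat_add_one_of_forall_norm_apply_le hc happly
  have hneg : Summable fun k : ℕ => c (1 - (k + 1)) :=
    summable_nat_add_one_of_forall_norm_apply_le (c := fun n => c (1 - n)) (fun n => hc _)
      fun a ha n => by
        simpa using happly _ (comp_neg_mem_consecutiveLipschitzBall ha) (-n)
  refine Summable.of_nat_of_neg ((summable_nat_add_iff 1).1 ?_) ?_
  · simpa using hpos
  · simpa using hneg

theorem isCompact_consecutive_lipschitzBall_iff_summable_general [ProperSpace E]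
    (hc : ∀ n, 0 ≤ c n) : IsCompact (consecutiveLipschitzBall E c) ↔ Summable c :=
  ⟨fun hcompact => summable_of_isBounded_consecutiveLipschitzBall hc hcompact.isBounded,
    isCompact_consecutiveLipschitzBall_of_summable hc⟩

end ConsecutiveLipschitzBall

/-- for a metric `d` on `ℤ`, the Lipschitz ball of consecutive differences
`{ a ∈ C₀(ℤ, ℂ) | ∀ n, ‖a n - a (n-1)‖ ≤ d n (n-1) }` is compact if and only if the
distances between consecutive points are summable. -/
theorem isCompact_consecutive_lipschitzBall_iff_summable (d : ℤ → ℤ → ℝ)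
    (hd0 : ∀ m n : ℤ, d m n = 0 ↔ m = n)
    (hdsymm : ∀ m n : ℤ, d m n = d n m)
    (hdtri : ∀ m n k : ℤ, d m n ≤ d m k + d k n) :
    IsCompact {a : C₀(ℤ, ℂ) | ∀ n : ℤ, ‖a n - a (n - 1)‖ ≤ d n (n - 1)} ↔
      Summable (fun n : ℤ => d n (n - 1)) := by
  have hnonneg : ∀ m n, 0 ≤ d m n := fun m n => by
    linarith [hdtri m m n, (hd0 m m).2 rfl, hdsymm n m]
  exact isCompact_consecutive_lipschitzBall_iff_summable_general (E := ℂ) fun n => hnonneg n (n - 1)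
end

section
/- Let d be a metric on ℤ, let ρ and ω be probability distributions on ℤ, and let μ be a coupling of ρ and ω such that the cost function (fun p : ℤ × ℤ => μ p * d p.1 p.2) is summable. Then for every a ∈ C₀(ℤ, ℂ) satisfying ‖a m − a n‖ ≤ d m n for all m, n ∈ ℤ, one has ‖∑' n, (ρ n − ω n) * a n‖ ≤ ∑' p : ℤ × ℤ, μ p * d p.1 p.2. (This is the inequality 'Connes distance ≤ Wasserstein distance' half of the Kantorovich–Rubinstein duality.) -/
open scoped ZeroAtInfty

/-!
Summing `μ p • (f p.1 - f p.2)` over the fibres of a coupling `μ` of `ρ` and `ω` gives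
`∑ (ρ i - ω i) • f i = ∑ μ p • (f p.1 - f p.2)`, and each term on the right is at most
`μ p * d p.1 p.2` in norm. The rearrangement needs `μ p • f p.1` and `μ p • f p.2` to be separately
summable: the first amounts to integrability of `f` against `ρ`, and the second follows because the
difference is dominated by the summable cost.
-/

/-- A coupling of two nonnegative weights `ρ` and `ω`: a summable nonnegative weight on the product
whose marginals are `ρ` and `ω`. Total mass one is not imposed; summability of `μ` makes the
marginal `tsum`s genuine sums. -/
structure IsCoupling_s8 {ι κ : Type*} (μ : ι × κ → ℝ) (ρ : ι → ℝ) (ω : κ → ℝ) : Prop where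
  nonneg : ∀ p, 0 ≤ μ p
  summable : Summable μ
  tsum_fst : ∀ i, ∑' j, μ (i, j) = ρ i
  tsum_snd : ∀ j, ∑' i, μ (i, j) = ω j

namespace IsCoupling_s8

section Marginals

variable {ι κ : Type*} {μ : ι × κ → ℝ} {ρ : ι → ℝ} {ω : κ → ℝ}

theorem swap (h : IsCoupling_s8 μ ρ ω) : IsCoupling_s8 (μ ∘ Prod.swap) ω ρ where
  nonneg p := h.nonneg p.swap
  summable := h.summable.prod_symm
  tsum_fst := h.tsum_snd
  tsum_snd := h.tsum_fst

theorem hasSum_fst (h : IsCoupling_s8 μ ρ ω) (i : ι) : HasSum (fun j => μ (i, j)) (ρ i) :=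
  h.tsum_fst i ▸ (h.summable.prod_factor i).hasSum

variable {E : Type*} [NormedAddCommGroup E] [NormedSpace ℝ E]

theorem hasSum_smul_fst (h : IsCoupling_s8 μ ρ ω) {f : ι → E}
    (hf : Summable fun p : ι × κ => μ p • f p.1) :
    HasSum (fun i => ρ i • f i) (∑' p : ι × κ, μ p • f p.1) :=
  hf.hasSum.prod_fiberwise fun i => (h.hasSum_fst i).smul_const (f i)

theorem hasSum_smul_snd (h : IsCoupling_s8 μ ρ ω) {g : κ → E}
    (hg : Summable fun p : ι × κ => μ p • g p.2) :
    HasSum (fun j => ω j • g j) (∑' p : ι × κ, μ p • g p.2) := by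
  rw [← (Equiv.prodComm κ ι).tsum_eq]
  exact h.swap.hasSum_smul_fst hg.prod_symm

variable [CompleteSpace E]

theorem summable_smul_fst (h : IsCoupling_s8 μ ρ ω) {f : ι → E}
    (hf : Summable fun i => ρ i * ‖f i‖) :
    Summable fun p : ι × κ => μ p • f p.1 := by
  have hasSum_fibre (i : ι) : HasSum (fun j => μ (i, j) * ‖f i‖) (ρ i * ‖f i‖) :=
    (h.hasSum_fst i).mul_right ‖f i‖
  have summable_norm : Summable fun p : ι × κ => μ p * ‖f p.1‖ :=
    (summable_prod_of_nonneg fun p => mul_nonneg (h.nonneg p) (norm_nonneg _)).2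
      ⟨fun i => (hasSum_fibre i).summable, by simpa only [(hasSum_fibre _).tsum_eq] using hf⟩
  exact .of_norm_bounded summable_norm fun p => by rw [norm_smul_of_nonneg (h.nonneg p)]

end Marginals

theorem hasSum_sub_smul {ι E : Type*} [NormedAddCommGroup E] [NormedSpace ℝ E] [CompleteSpace E]
    {μ : ι × ι → ℝ} {ρ ω : ι → ℝ} {f : ι → E} (h : IsCoupling_s8 μ ρ ω)
    (hf : Summable fun i => ρ i * ‖f i‖)
    (hsub : Summable fun p : ι × ι => μ p • (f p.1 - f p.2)) :
    HasSum (fun i => (ρ i - ω i) • f i) (∑' p : ι × ι, μ p • (f p.1 - f p.2)) := by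
  have summable_fst : Summable fun p : ι × ι => μ p • f p.1 := h.summable_smul_fst hf
  have summable_snd : Summable fun p : ι × ι => μ p • f p.2 := by
    simpa only [smul_sub, sub_sub_cancel] using summable_fst.sub hsub
  simpa only [sub_smul, smul_sub, summable_fst.tsum_sub summable_snd] using
    (h.hasSum_smul_fst summable_fst).sub (h.hasSum_smul_snd summable_snd)

end IsCoupling_s8

theorem summable_mul_norm_zeroAtInfty {X E : Type*} [TopologicalSpace X] [SeminormedAddCommGroup E]
    {ρ : X → ℝ} (hρ : Summable ρ) (a : C₀(X, E)) : Summable fun x => ρ x * ‖a x‖ := by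
  refine .of_norm_bounded (hρ.norm.mul_right ‖a‖) fun x => ?_
  rw [norm_mul, norm_norm]
  exact mul_le_mul_of_nonneg_left (a.toBCF.norm_coe_le_norm x) (norm_nonneg _)

theorem connes_le_wasserstein_general {ι E : Type*} [NormedAddCommGroup E] [NormedSpace ℝ E]
    [CompleteSpace E] {μ : ι × ι → ℝ} {ρ ω : ι → ℝ} {d : ι → ι → ℝ} {f : ι → E}
    (hμ : IsCoupling_s8 μ ρ ω) (hf : Summable fun i => ρ i * ‖f i‖)
    (hcost : Summable fun p : ι × ι => μ p * d p.1 p.2) (hfd : ∀ i j, ‖f i - f j‖ ≤ d i j) :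
    ‖∑' i, (ρ i - ω i) • f i‖ ≤ ∑' p : ι × ι, μ p * d p.1 p.2 := by
  have norm_le (p : ι × ι) : ‖μ p • (f p.1 - f p.2)‖ ≤ μ p * d p.1 p.2 := by
    rw [norm_smul_of_nonneg (hμ.nonneg p)]
    exact mul_le_mul_of_nonneg_left (hfd p.1 p.2) (hμ.nonneg p)
  rw [(hμ.hasSum_sub_smul hf (.of_norm_bounded hcost norm_le)).tsum_eq]
  exact tsum_of_norm_bounded hcost.hasSum norm_le

/-- Connes distance ≤ Wasserstein distance.  For a metric `d` on `ℤ`,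
probability distributions `ρ, ω` on `ℤ`, a coupling `μ` of `ρ` and `ω` with summable
cost, and any `a ∈ C₀(ℤ, ℂ)` which is `1`-Lipschitz for `d`, one has
`‖∑' n, (ρ n - ω n) * a n‖ ≤ ∑' p, μ p * d p.1 p.2`. -/
theorem connes_le_wasserstein (d : ℤ → ℤ → ℝ)
    (hd0 : ∀ m n : ℤ, d m n = 0 ↔ m = n)
    (hdsymm : ∀ m n : ℤ, d m n = d n m)
    (hdtri : ∀ m n k : ℤ, d m n ≤ d m k + d k n)
    (ρ ω : ℤ → ℝ)
    (hρpos : ∀ n : ℤ, 0 ≤ ρ n) (hρsum : Summable ρ) (hρ1 : ∑' n : ℤ, ρ n = 1)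
    (hωpos : ∀ n : ℤ, 0 ≤ ω n) (hωsum : Summable ω) (hω1 : ∑' n : ℤ, ω n = 1)
    (μ : ℤ × ℤ → ℝ) (hμsum : Summable μ) (hμpos : ∀ p : ℤ × ℤ, 0 ≤ μ p)
    (hμρ : ∀ m : ℤ, ∑' n : ℤ, μ (m, n) = ρ m)
    (hμω : ∀ n : ℤ, ∑' m : ℤ, μ (m, n) = ω n)
    (hcost : Summable (fun p : ℤ × ℤ => μ p * d p.1 p.2))
    (a : C₀(ℤ, ℂ)) (ha : ∀ m n : ℤ, ‖a m - a n‖ ≤ d m n) :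
    ‖∑' n : ℤ, ((ρ n - ω n : ℝ) : ℂ) * a n‖ ≤ ∑' p : ℤ × ℤ, μ p * d p.1 p.2 := by
  simpa only [Complex.real_smul] using connes_le_wasserstein_general
    ⟨hμpos, hμsum, hμρ, hμω⟩ (summable_mul_norm_zeroAtInfty hρsum a) hcost ha
end

section
/- The space of probability distributions on ℤ with finite first moment is complete for the Wasserstein distance W₁ associated with the usual metric |m − n| on ℤ. Concretely: let (ρ_j) be a sequence of probability distributions on ℤ with finite first moment which is W₁-Cauchy, i.e. for every ε > 0 there exists J such that for all i, j ≥ J there is a coupling μ of ρ_i and ρ_j with ∑' p : ℤ × ℤ, μ p * |p.1 − p.2| ≤ ε. Then there exists a probability distribution ρ on ℤ with finite first moment such that for every ε > 0 there exists J such that for every j ≥ J there is a coupling μ of ρ_j and ρ with ∑' p : ℤ × ℤ, μ p * |p.1 − p.2| ≤ ε. -/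
/-- `μ` is a coupling of the probability distributions `ρ` and `ω` on `ℤ`. -/
def IsCoupling (ρ ω : ℤ → ℝ) (μ : ℤ × ℤ → ℝ) : Prop :=
  Summable μ ∧ (∀ p : ℤ × ℤ, 0 ≤ μ p) ∧
    (∀ m : ℤ, ∑' n : ℤ, μ (m, n) = ρ m) ∧ (∀ n : ℤ, ∑' m : ℤ, μ (m, n) = ω n)

/-- `ρ` is a probability distribution on `ℤ` with finite first moment. -/
def IsProbFiniteMoment (ρ : ℤ → ℝ) : Prop :=
  (∀ n : ℤ, 0 ≤ ρ n) ∧ Summable ρ ∧ (∑' n : ℤ, ρ n = 1) ∧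
    Summable (fun n : ℤ => |(n : ℝ)| * ρ n)

/-!
All limits are taken pointwise along a fixed ultrafilter on the index set, where they exist by
compactness of order intervals of functions. Let `ρ` be the limit of the sequence and, for a fixed
index `j`, let `μ` be the limit of couplings of `ρ_j` and `ρ_i` of cost at most `ε`. By Fatou the
cost of `μ` is at most `ε`. No mass escapes from a row or a column of the couplings, because by
Markov's inequality at most `ε / R` of it lies at distance at least `R` from the diagonal and balls
are finite; hence `μ` is a coupling of `ρ_j` and `ρ`. A coupling of finite cost carries total mass
and finiteness of the first moment over from `ρ_j` to `ρ`.
-/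

open Filter Topology

theorem exists_tendsto_of_eventually_mem_Icc {ι X : Type*} [TopologicalSpace X] [Preorder X]
    [CompactIccSpace X] {U : Ultrafilter ι} {f : ι → X} {a b : X}
    (hf : ∀ᶠ i in (U : Filter ι), f i ∈ Set.Icc a b) :
    ∃ g, Tendsto f U (𝓝 g) :=
  let ⟨g, _, hg⟩ := isCompact_Icc.ultrafilter_le_nhds' (U.map f) hf
  ⟨g, hg⟩

section WeightedSums

variable {ι α : Type*}

-- Weighted sums are bounded via finite partial sums, since `tsum` is `0` for a divergent series.
theorem hasSum_le_sum_add_div_of_weighted_sum_le {f w : α → ℝ} {s C R : ℝ} {K : Finset α}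
    (hf : ∀ x, 0 ≤ f x) (hs : HasSum f s) (hR : 0 < R) (hK : ∀ x ∉ K, R ≤ w x)
    (hC : ∀ T : Finset α, ∑ x ∈ T, f x * w x ≤ C) :
    s ≤ ∑ x ∈ K, f x + C / R := by
  classical
  refine hasSum_le_of_sum_le hs fun T => ?_
  have inside : ∑ x ∈ T ∩ K, f x ≤ ∑ x ∈ K, f x :=
    Finset.sum_le_sum_of_subset_of_nonneg Finset.inter_subset_right fun x _ _ => hf x
  have outside : ∑ x ∈ T \ K, f x ≤ C / R := by
    rw [le_div_iff₀ hR, Finset.sum_mul]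
    calc ∑ x ∈ T \ K, f x * R ≤ ∑ x ∈ T \ K, f x * w x :=
          Finset.sum_le_sum fun x hx =>
            mul_le_mul_of_nonneg_left (hK x (Finset.mem_sdiff.1 hx).2) (hf x)
      _ ≤ C := hC _
  calc ∑ x ∈ T, f x = ∑ x ∈ T ∩ K, f x + ∑ x ∈ T \ K, f x :=
        (Finset.sum_inter_add_sum_sdiff T K f).symm
    _ ≤ ∑ x ∈ K, f x + C / R := add_le_add inside outside

theorem hasSum_of_tendsto_of_weighted_sum_le {l : Filter ι} [l.NeBot] {f : ι → α → ℝ}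
    {g w : α → ℝ} {s : ι → ℝ} {t C : ℝ} (hw : Tendsto w cofinite atTop)
    (hf : ∀ᶠ i in l, ∀ x, 0 ≤ f i x) (hsum : ∀ᶠ i in l, HasSum (f i) (s i))
    (hC : ∀ᶠ i in l, ∀ T : Finset α, ∑ x ∈ T, f i x * w x ≤ C)
    (hfg : ∀ x, Tendsto (fun i => f i x) l (𝓝 (g x))) (hst : Tendsto s l (𝓝 t)) :
    HasSum g t := by
  have tendsto_sum (T : Finset α) : Tendsto (fun i => ∑ x ∈ T, f i x) l (𝓝 (∑ x ∈ T, g x)) :=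
    tendsto_finsetSum T fun x _ => hfg x
  have hg (x : α) : 0 ≤ g x := ge_of_tendsto (hfg x) (hf.mono fun i hi => hi x)
  refine hasSum_of_isLUB_of_nonneg t hg ⟨?_, fun b hb => ?_⟩
  · rintro _ ⟨T, rfl⟩
    refine le_of_tendsto_of_tendsto (tendsto_sum T) hst ?_
    filter_upwards [hf, hsum] with i hfi hsi
    exact sum_le_hasSum T (fun x _ => hfi x) hsi
  · have le_add_div (R : ℝ) (hR : 0 < R) : t ≤ b + C / R := by
      have hfin : {x | ¬R ≤ w x}.Finite := hw.eventually_ge_atTop R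
      have hK : ∀ x ∉ hfin.toFinset, R ≤ w x := fun x hx => by simpa using hx
      calc t ≤ ∑ x ∈ hfin.toFinset, g x + C / R := by
            refine le_of_tendsto_of_tendsto hst ((tendsto_sum _).add_const _) ?_
            filter_upwards [hf, hsum, hC] with i hfi hsi hCi
            exact hasSum_le_sum_add_div_of_weighted_sum_le hfi hsi hR hK hCi
        _ ≤ b + C / R := by gcongr; exact hb ⟨_, rfl⟩
    have hlim : Tendsto (fun R : ℝ => b + C / R) atTop (𝓝 b) := by
      simpa using (tendsto_id.const_div_atTop C).const_add b
    exact ge_of_tendsto hlim ((eventually_gt_atTop 0).mono le_add_div)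

end WeightedSums

/-- `μ` is a coupling of the discrete mass distributions `ρ` on `α` and `ω` on `β`: a nonnegative
summable function whose marginals are `ρ` and `ω`. The total mass is not required to be `1`. -/
structure IsDiscreteCoupling {α β : Type*} (ρ : α → ℝ) (ω : β → ℝ) (μ : α × β → ℝ) : Prop where
  summable : Summable μ
  nonneg : ∀ p, 0 ≤ μ p
  hasSum_fst : ∀ a, HasSum (fun b => μ (a, b)) (ρ a)
  hasSum_snd : ∀ b, HasSum (fun a => μ (a, b)) (ω b)

namespace IsDiscreteCoupling

variable {ι α β : Type*} {ρ : α → ℝ} {ω : β → ℝ} {μ : α × β → ℝ}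

theorem swap (h : IsDiscreteCoupling ρ ω μ) : IsDiscreteCoupling ω ρ (μ ∘ Prod.swap) where
  summable := h.summable.prod_symm
  nonneg p := h.nonneg p.swap
  hasSum_fst := h.hasSum_snd
  hasSum_snd := h.hasSum_fst

theorem snd_nonneg (h : IsDiscreteCoupling ρ ω μ) (b : β) : 0 ≤ ω b :=
  (h.hasSum_snd b).nonneg fun _ => h.nonneg _

theorem le_fst (h : IsDiscreteCoupling ρ ω μ) (p : α × β) : μ p ≤ ρ p.1 :=
  le_hasSum (h.hasSum_fst p.1) p.2 fun _ _ => h.nonneg _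

theorem hasSum_fst_tsum (h : IsDiscreteCoupling ρ ω μ) : HasSum ρ (∑' p, μ p) :=
  h.summable.hasSum.prod_fiberwise h.hasSum_fst

theorem hasSum_snd_of_hasSum_fst {s : ℝ} (h : IsDiscreteCoupling ρ ω μ) (hρ : HasSum ρ s) :
    HasSum ω s := by
  have tsum_swap : ∑' p, (μ ∘ Prod.swap) p = ∑' p, μ p := (Equiv.prodComm β α).tsum_eq μ
  rw [hρ.unique h.hasSum_fst_tsum, ← tsum_swap]
  exact h.swap.hasSum_fst_tsum

theorem summable_weight_fst_iff {w : α → ℝ} (h : IsDiscreteCoupling ρ ω μ) (hw : ∀ a, 0 ≤ w a) :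
    Summable (fun p : α × β => w p.1 * μ p) ↔ Summable fun a => w a * ρ a := by
  have row (a : α) : HasSum (fun b => w a * μ (a, b)) (w a * ρ a) := (h.hasSum_fst a).mul_left _
  rw [summable_prod_of_nonneg fun p => mul_nonneg (hw p.1) (h.nonneg p)]
  simp only [fun a => (row a).summable, fun a => (row a).tsum_eq, implies_true, true_and]

theorem summable_weight_snd_iff {w : β → ℝ} (h : IsDiscreteCoupling ρ ω μ) (hw : ∀ b, 0 ≤ w b) :
    Summable (fun p : α × β => w p.2 * μ p) ↔ Summable fun b => w b * ω b := by
  rw [← h.swap.summable_weight_fst_iff hw, ← (Equiv.prodComm α β).summable_iff]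
  rfl

theorem of_tendsto {l : Filter ι} [l.NeBot] {ρs : ι → α → ℝ} {ωs : ι → β → ℝ}
    {μs : ι → α × β → ℝ} {c : α × β → ℝ} {C : ℝ}
    (hrow : ∀ a, Tendsto (fun b => c (a, b)) cofinite atTop)
    (hcol : ∀ b, Tendsto (fun a => c (a, b)) cofinite atTop)
    (hcoupling : ∀ᶠ i in l, IsDiscreteCoupling (ρs i) (ωs i) (μs i))
    (hcost : ∀ᶠ i in l, ∀ T : Finset (α × β), ∑ p ∈ T, μs i p * c p ≤ C)
    (hρ : Tendsto ρs l (𝓝 ρ)) (hω : Tendsto ωs l (𝓝 ω)) (hμ : Tendsto μs l (𝓝 μ))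
    (hρsum : Summable ρ) :
    IsDiscreteCoupling ρ ω μ := by
  rw [tendsto_pi_nhds] at hρ hω hμ
  have nonneg (p : α × β) : 0 ≤ μ p :=
    ge_of_tendsto (hμ p) (hcoupling.mono fun i hi => hi.nonneg p)
  have hasSum_row (a : α) : HasSum (fun b => μ (a, b)) (ρ a) :=
    hasSum_of_tendsto_of_weighted_sum_le (hrow a)
      (hcoupling.mono fun i hi b => hi.nonneg (a, b))
      (hcoupling.mono fun i hi => hi.hasSum_fst a)
      (hcost.mono fun i hi T => by simpa [Finset.sum_product] using hi ({a} ×ˢ T))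
      (fun b => hμ (a, b)) (hρ a)
  have hasSum_col (b : β) : HasSum (fun a => μ (a, b)) (ω b) :=
    hasSum_of_tendsto_of_weighted_sum_le (hcol b)
      (hcoupling.mono fun i hi a => hi.nonneg (a, b))
      (hcoupling.mono fun i hi => hi.hasSum_snd b)
      (hcost.mono fun i hi T => by simpa [Finset.sum_product] using hi (T ×ˢ {b}))
      (fun a => hμ (a, b)) (hω b)
  refine ⟨(summable_prod_of_nonneg nonneg).2 ⟨fun a => (hasSum_row a).summable, ?_⟩,
    nonneg, hasSum_row, hasSum_col⟩
  simpa only [fun a => (hasSum_row a).tsum_eq] using hρsum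

theorem exists_cost_le_of_ultrafilter_tendsto {U : Ultrafilter ι} {ωs : ι → β → ℝ}
    {c : α × β → ℝ} {C : ℝ}
    (hrow : ∀ a, Tendsto (fun b => c (a, b)) cofinite atTop)
    (hcol : ∀ b, Tendsto (fun a => c (a, b)) cofinite atTop)
    (hcoupling : ∀ᶠ i in (U : Filter ι), ∃ μ, IsDiscreteCoupling ρ (ωs i) μ ∧
      ∀ T : Finset (α × β), ∑ p ∈ T, μ p * c p ≤ C)
    (hω : Tendsto ωs U (𝓝 ω)) (hρ : Summable ρ) :
    ∃ μ, IsDiscreteCoupling ρ ω μ ∧ ∀ T : Finset (α × β), ∑ p ∈ T, μ p * c p ≤ C := by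
  obtain ⟨μs, hμs⟩ := hcoupling.choice
  obtain ⟨μ, hμ⟩ := exists_tendsto_of_eventually_mem_Icc (b := fun p => ρ p.1)
    (hμs.mono fun i hi => ⟨hi.1.nonneg, hi.1.le_fst⟩)
  refine ⟨μ, of_tendsto hrow hcol (hμs.mono fun i hi => hi.1) (hμs.mono fun i hi => hi.2)
    tendsto_const_nhds hω hμ hρ, fun T => ?_⟩
  exact le_of_tendsto
    (tendsto_finsetSum T fun p _ => (tendsto_pi_nhds.1 hμ p).mul_const (c p))
    (hμs.mono fun i hi => hi.2 T)

end IsDiscreteCoupling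

/-- `ρ` is a discrete probability distribution on `α` with finite first moment, the moment being
taken about the base point `x₀`. -/
structure IsProbWithFirstMoment {α : Type*} [PseudoMetricSpace α] (x₀ : α) (ρ : α → ℝ) :
    Prop where
  nonneg : ∀ x, 0 ≤ ρ x
  hasSum_one : HasSum ρ 1
  summable_moment : Summable fun x => dist x x₀ * ρ x

section FirstMoment

variable {α : Type*} [PseudoMetricSpace α] {x₀ : α} {ρ ω : α → ℝ} {μ : α × α → ℝ}

namespace IsProbWithFirstMoment

theorem le_one (h : IsProbWithFirstMoment x₀ ρ) (x : α) : ρ x ≤ 1 :=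
  le_hasSum h.hasSum_one x fun y _ => h.nonneg y

theorem summable_cost (hρ : IsProbWithFirstMoment x₀ ρ) (hω : IsProbWithFirstMoment x₀ ω)
    (hμ : IsDiscreteCoupling ρ ω μ) : Summable fun p : α × α => μ p * dist p.1 p.2 := by
  have hfst := (hμ.summable_weight_fst_iff fun x => dist_nonneg).2 hρ.summable_moment
  have hsnd := (hμ.summable_weight_snd_iff fun x => dist_nonneg).2 hω.summable_moment
  refine (hfst.add hsnd).of_nonneg_of_le (fun p => mul_nonneg (hμ.nonneg p) dist_nonneg)
    fun p => ?_
  calc μ p * dist p.1 p.2 ≤ μ p * (dist p.1 x₀ + dist p.2 x₀) :=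
        mul_le_mul_of_nonneg_left (dist_triangle_right _ _ _) (hμ.nonneg p)
    _ = dist p.1 x₀ * μ p + dist p.2 x₀ * μ p := by ring

theorem of_isDiscreteCoupling (hρ : IsProbWithFirstMoment x₀ ρ) (hμ : IsDiscreteCoupling ρ ω μ)
    (hcost : Summable fun p : α × α => μ p * dist p.1 p.2) : IsProbWithFirstMoment x₀ ω where
  nonneg := hμ.snd_nonneg
  hasSum_one := hμ.hasSum_snd_of_hasSum_fst hρ.hasSum_one
  summable_moment := by
    have hfst := (hμ.summable_weight_fst_iff fun x => dist_nonneg).2 hρ.summable_moment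
    rw [← hμ.summable_weight_snd_iff fun x => dist_nonneg]
    refine (hfst.add hcost).of_nonneg_of_le (fun p => mul_nonneg dist_nonneg (hμ.nonneg p))
      fun p => ?_
    calc dist p.2 x₀ * μ p ≤ (dist p.1 x₀ + dist p.1 p.2) * μ p :=
          mul_le_mul_of_nonneg_right
            ((dist_triangle_left _ _ p.1).trans_eq (add_comm _ _)) (hμ.nonneg p)
      _ = dist p.1 x₀ * μ p + μ p * dist p.1 p.2 := by ring

end IsProbWithFirstMoment

theorem exists_isDiscreteCoupling_of_ultrafilter_tendsto [ProperSpace α] [DiscreteTopology α]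
    {ι : Type*} {U : Ultrafilter ι} {ρs : ι → α → ℝ} {ε : ℝ}
    (hω : IsProbWithFirstMoment x₀ ω) (hρs : ∀ i, IsProbWithFirstMoment x₀ (ρs i))
    (hcoupling : ∀ᶠ i in (U : Filter ι), ∃ μ, IsDiscreteCoupling ω (ρs i) μ ∧
      ∑' p : α × α, μ p * dist p.1 p.2 ≤ ε)
    (hρ : Tendsto ρs U (𝓝 ρ)) :
    IsProbWithFirstMoment x₀ ρ ∧
      ∃ μ, IsDiscreteCoupling ω ρ μ ∧ ∑' p : α × α, μ p * dist p.1 p.2 ≤ ε := by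
  have cost_nonneg {σ : α → ℝ} {μ : α × α → ℝ} (hμ : IsDiscreteCoupling ω σ μ) (p : α × α) :
      0 ≤ μ p * dist p.1 p.2 := mul_nonneg (hμ.nonneg p) dist_nonneg
  have hfinite : ∀ᶠ i in (U : Filter ι), ∃ μ, IsDiscreteCoupling ω (ρs i) μ ∧
      ∀ T : Finset (α × α), ∑ p ∈ T, μ p * dist p.1 p.2 ≤ ε :=
    hcoupling.mono fun i ⟨μ, hμ, hε⟩ => ⟨μ, hμ, fun T =>
      ((hω.summable_cost (hρs i) hμ).sum_le_tsum T fun p _ => cost_nonneg hμ p).trans hε⟩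
  obtain ⟨μ, hμ, hcost⟩ := IsDiscreteCoupling.exists_cost_le_of_ultrafilter_tendsto
    (fun x => cocompact_eq_cofinite α ▸ tendsto_dist_left_cocompact_atTop x)
    (fun y => cocompact_eq_cofinite α ▸ tendsto_dist_right_cocompact_atTop y)
    hfinite hρ hω.hasSum_one.summable
  have hsummable := summable_of_sum_le (cost_nonneg hμ) hcost
  exact ⟨hω.of_isDiscreteCoupling hμ hsummable, μ, hμ, hsummable.tsum_le_of_sum_le hcost⟩

end FirstMoment

theorem wasserstein_complete_general {α : Type*} [PseudoMetricSpace α] [ProperSpace α]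
    [DiscreteTopology α] (x₀ : α) (ρseq : ℕ → α → ℝ)
    (hseq : ∀ j, IsProbWithFirstMoment x₀ (ρseq j))
    (hCauchy : ∀ ε : ℝ, 0 < ε → ∃ J : ℕ, ∀ i j : ℕ, J ≤ i → J ≤ j →
      ∃ μ, IsDiscreteCoupling (ρseq i) (ρseq j) μ ∧ ∑' p : α × α, μ p * dist p.1 p.2 ≤ ε) :
    ∃ ρ, IsProbWithFirstMoment x₀ ρ ∧
      ∀ ε : ℝ, 0 < ε → ∃ J : ℕ, ∀ j : ℕ, J ≤ j →
        ∃ μ, IsDiscreteCoupling (ρseq j) ρ μ ∧ ∑' p : α × α, μ p * dist p.1 p.2 ≤ ε := by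
  obtain ⟨ρ, hρ⟩ : ∃ ρ, Tendsto ρseq (hyperfilter ℕ) (𝓝 ρ) :=
    exists_tendsto_of_eventually_mem_Icc (a := 0) (b := 1)
      (Eventually.of_forall fun j => ⟨(hseq j).nonneg, (hseq j).le_one⟩)
  have limit (ε : ℝ) (hε : 0 < ε) : ∃ J : ℕ, ∀ j : ℕ, J ≤ j → IsProbWithFirstMoment x₀ ρ ∧
      ∃ μ, IsDiscreteCoupling (ρseq j) ρ μ ∧ ∑' p : α × α, μ p * dist p.1 p.2 ≤ ε := by
    obtain ⟨J, hJ⟩ := hCauchy ε hε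
    have hlarge : ∀ᶠ i in (hyperfilter ℕ : Filter ℕ), J ≤ i :=
      Nat.hyperfilter_le_atTop (eventually_ge_atTop J)
    exact ⟨J, fun j hj => exists_isDiscreteCoupling_of_ultrafilter_tendsto (hseq j) hseq
      (hlarge.mono fun i hi => hJ j i hj hi) hρ⟩
  obtain ⟨J, hJ⟩ := limit 1 one_pos
  refine ⟨ρ, (hJ J le_rfl).1, fun ε hε => ?_⟩
  exact (limit ε hε).imp fun J hJ j hj => (hJ j hj).2

theorem isCoupling_iff_isDiscreteCoupling {ρ ω : ℤ → ℝ} {μ : ℤ × ℤ → ℝ} :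
    IsCoupling ρ ω μ ↔ IsDiscreteCoupling ρ ω μ := by
  refine ⟨fun ⟨hsum, hnonneg, hfst, hsnd⟩ => ⟨hsum, hnonneg, fun m => ?_, fun n => ?_⟩,
    fun h => ⟨h.summable, h.nonneg, fun m => (h.hasSum_fst m).tsum_eq,
      fun n => (h.hasSum_snd n).tsum_eq⟩⟩
  · exact hfst m ▸ (hsum.prod_factor m).hasSum
  · exact hsnd n ▸ (hsum.prod_symm.prod_factor n).hasSum

theorem isProbFiniteMoment_iff_isProbWithFirstMoment {ρ : ℤ → ℝ} :
    IsProbFiniteMoment ρ ↔ IsProbWithFirstMoment 0 ρ := by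
  have dist_zero (n : ℤ) : dist n 0 = |(n : ℝ)| := by rw [Int.dist_eq, Int.cast_zero, sub_zero]
  constructor
  · rintro ⟨hnonneg, hsum, hone, hmoment⟩
    exact ⟨hnonneg, hone ▸ hsum.hasSum, by simpa only [dist_zero] using hmoment⟩
  · rintro ⟨hnonneg, hone, hmoment⟩
    exact ⟨hnonneg, hone.summable, hone.tsum_eq, by simpa only [dist_zero] using hmoment⟩

/-- the space of probability distributions on `ℤ` with finite first moment
is complete for the Wasserstein distance `W₁` associated with the usual metric on `ℤ`:
every `W₁`-Cauchy sequence converges in `W₁` to a probability distribution with finite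
first moment. -/
theorem wasserstein_complete
    (ρseq : ℕ → ℤ → ℝ) (hseq : ∀ j : ℕ, IsProbFiniteMoment (ρseq j))
    (hCauchy : ∀ ε : ℝ, 0 < ε → ∃ J : ℕ, ∀ i j : ℕ, J ≤ i → J ≤ j →
      ∃ μ : ℤ × ℤ → ℝ, IsCoupling (ρseq i) (ρseq j) μ ∧
        ∑' p : ℤ × ℤ, μ p * |(p.1 : ℝ) - (p.2 : ℝ)| ≤ ε) :
    ∃ ρ : ℤ → ℝ, IsProbFiniteMoment ρ ∧
      ∀ ε : ℝ, 0 < ε → ∃ J : ℕ, ∀ j : ℕ, J ≤ j →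
        ∃ μ : ℤ × ℤ → ℝ, IsCoupling (ρseq j) ρ μ ∧
          ∑' p : ℤ × ℤ, μ p * |(p.1 : ℝ) - (p.2 : ℝ)| ≤ ε := by
  simp only [isProbFiniteMoment_iff_isProbWithFirstMoment, isCoupling_iff_isDiscreteCoupling,
    ← Int.dist_eq] at hseq hCauchy ⊢
  exact wasserstein_complete_general 0 ρseq hseq hCauchy
end

section
/- Let F be a D-tight set of probability distributions on ℤ with finite first moment. Then every sequence (ρ_j) of elements of F has a subsequence converging pointwise (i.e. at every n ∈ ℤ) to a function ρ : ℤ → ℝ which is again a probability distribution on ℤ, and this ρ has finite first moment. (In particular, D-tight weak*-closed sets are weak*-compact.) -/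
/-- `F` is a `D`-tight set of probability distributions on `ℤ` with finite first
moment: the first-moment tails are uniformly small over `F`. -/
def IsDTight (F : Set (ℤ → ℝ)) : Prop :=
  (∀ ω ∈ F, IsProbFiniteMoment ω) ∧
    ∀ ε : ℝ, 0 < ε → ∃ N : ℕ, ∀ ω ∈ F,
      ∑' n : {n : ℤ // (N : ℤ) < |n|}, |((n : ℤ) : ℝ)| * ω n ≤ ε

/-!
`D`-tightness bounds the first moments uniformly, and this bound is all that is needed. The
distributions lie in the compact metrizable cube `[0, 1]^ℤ`, so some subsequence converges
pointwise. Fatou's lemma bounds the first moment of the limit, and no mass escapes to infinity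
because Markov's inequality makes the mass outside a large ball uniformly small.
-/

open Filter Topology

section WeightedSums

variable {ι : Type*} {w u : ι → ℝ}

theorem tsum_mul_le_tsum_subtype_add_of_le {s : Set ι} {R : ℝ} (hR : 0 ≤ R)
    (hwR : ∀ i ∉ s, w i ≤ R) (hu : ∀ i, 0 ≤ u i) (hsum : Summable u)
    (hwsum : Summable fun i => w i * u i) :
    ∑' i, w i * u i ≤ (∑' i : s, w i * u i) + R * ∑' i, u i := by
  have hcompl : ∑' i : ↑sᶜ, w i * u i ≤ R * ∑' i, u i :=
    calc ∑' i : ↑sᶜ, w i * u i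
        ≤ ∑' i : ↑sᶜ, R * u i :=
          (hwsum.subtype _).tsum_le_tsum
            (fun i => mul_le_mul_of_nonneg_right (hwR i i.2) (hu i))
            ((hsum.mul_left R).subtype _)
      _ ≤ ∑' i, R * u i :=
          (hsum.mul_left R).tsum_subtype_le _ sᶜ (fun i => mul_nonneg hR (hu i))
      _ = R * ∑' i, u i := tsum_mul_left
  rw [← hwsum.tsum_subtype_add_tsum_subtype_compl s]
  gcongr

theorem mul_tsum_sub_sum_le_tsum_mul {s : Finset ι} {R : ℝ} (hw : ∀ i, 0 ≤ w i)
    (hRw : ∀ i ∉ s, R ≤ w i) (hu : ∀ i, 0 ≤ u i) (hsum : Summable u)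
    (hwsum : Summable fun i => w i * u i) :
    R * (∑' i, u i - ∑ i ∈ s, u i) ≤ ∑' i, w i * u i :=
  calc R * (∑' i, u i - ∑ i ∈ s, u i)
      = R * ∑' i : {i // i ∉ s}, u i := by
        rw [← hsum.sum_add_tsum_subtype_compl s, add_sub_cancel_left]
    _ = ∑' i : {i // i ∉ s}, R * u i := tsum_mul_left.symm
    _ ≤ ∑' i : {i // i ∉ s}, w i * u i :=
        ((hsum.mul_left R).subtype _).tsum_le_tsum
          (fun i => mul_le_mul_of_nonneg_right (hRw i i.2) (hu i)) (hwsum.subtype _)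
    _ ≤ ∑' i, w i * u i :=
        hwsum.tsum_subtype_le _ {i | i ∉ s} (fun i => mul_nonneg (hw i) (hu i))

end WeightedSums

section PointwiseLimits

variable {α ι : Type*} {l : Filter α} [l.NeBot] {u : α → ι → ℝ} {ρ : ι → ℝ} {C : ℝ}

theorem sum_le_of_tendsto_of_tsum_le (hu : ∀ j i, 0 ≤ u j i) (hsum : ∀ j, Summable (u j))
    (hC : ∀ j, ∑' i, u j i ≤ C) (hlim : ∀ i, Tendsto (fun j => u j i) l (𝓝 (ρ i)))
    (s : Finset ι) : ∑ i ∈ s, ρ i ≤ C :=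
  le_of_tendsto' (tendsto_finsetSum s fun i _ => hlim i) fun j =>
    ((hsum j).sum_le_tsum s fun i _ => hu j i).trans (hC j)

theorem summable_of_tendsto_of_tsum_le (hu : ∀ j i, 0 ≤ u j i) (hsum : ∀ j, Summable (u j))
    (hC : ∀ j, ∑' i, u j i ≤ C) (hlim : ∀ i, Tendsto (fun j => u j i) l (𝓝 (ρ i))) :
    Summable ρ :=
  summable_of_sum_le (fun i => ge_of_tendsto' (hlim i) fun j => hu j i)
    (sum_le_of_tendsto_of_tsum_le hu hsum hC hlim)

theorem hasSum_of_tendsto_of_tsum_mul_le {w : ι → ℝ} {m : ℝ} (hw : ∀ i, 0 ≤ w i)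
    (hw_top : Tendsto w cofinite atTop) (hu : ∀ j i, 0 ≤ u j i) (hm : ∀ j, HasSum (u j) m)
    (hwsum : ∀ j, Summable fun i => w i * u j i) (hC : ∀ j, ∑' i, w i * u j i ≤ C)
    (hlim : ∀ i, Tendsto (fun j => u j i) l (𝓝 (ρ i))) : HasSum ρ m := by
  have hρ : ∀ i, 0 ≤ ρ i := fun i => ge_of_tendsto' (hlim i) fun j => hu j i
  have hsum_le : ∀ s : Finset ι, ∑ i ∈ s, ρ i ≤ m :=
    sum_le_of_tendsto_of_tsum_le hu (fun j => (hm j).summable) (fun j => (hm j).tsum_eq.le) hlim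
  have hρsum : Summable ρ := summable_of_sum_le hρ hsum_le
  have hdefect : ∀ R : ℕ, R * (m - ∑' i, ρ i) ≤ C := by
    intro R
    have hfin : {i | ¬ (R : ℝ) ≤ w i}.Finite := hw_top.eventually_ge_atTop (R : ℝ)
    have hmarkov : ∀ j, R * (m - ∑ i ∈ hfin.toFinset, u j i) ≤ C := fun j => by
      rw [← (hm j).tsum_eq]
      refine (mul_tsum_sub_sum_le_tsum_mul hw (fun i hi => ?_) (hu j) (hm j).summable
        (hwsum j)).trans (hC j)
      simpa using hi
    calc R * (m - ∑' i, ρ i)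
        ≤ R * (m - ∑ i ∈ hfin.toFinset, ρ i) := by
          gcongr
          exact hρsum.sum_le_tsum _ fun i _ => hρ i
      _ ≤ C := le_of_tendsto'
          (((tendsto_finsetSum _ fun i _ => hlim i).const_sub m).const_mul _) hmarkov
  have hm_le : m ≤ ∑' i, ρ i := by
    by_contra! hlt
    obtain ⟨R, hR⟩ := exists_lt_nsmul (sub_pos.2 hlt) C
    exact hR.not_ge ((nsmul_eq_mul R _).trans_le (hdefect R))
  exact hρsum.hasSum_iff.2 ((hρsum.tsum_le_of_sum_le hsum_le).antisymm hm_le)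

end PointwiseLimits

theorem countable_of_tendsto_cofinite_atTop {ι β : Type*} [Preorder β] [NoMaxOrder β]
    [(atTop : Filter β).IsCountablyGenerated] {w : ι → β} (hw_top : Tendsto w cofinite atTop) :
    Countable ι := by
  have hker : (atTop : Filter β).ker = ∅ :=
    Set.eq_empty_of_forall_notMem fun b hb => lt_irrefl b (hb _ (Ioi_mem_atTop b))
  rw [← Set.countable_univ_iff]
  simpa only [hker, Set.preimage_empty, Set.compl_empty] using hw_top.countable_compl_preimage_ker

/-- `ρ` is a probability distribution on `ι` under which the weight `w` has finite expectation.
For `w n = |n|` on `ℤ` this unfolds to `IsProbFiniteMoment`. -/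
def IsProbFiniteExpectation {ι : Type*} (w ρ : ι → ℝ) : Prop :=
  (∀ i, 0 ≤ ρ i) ∧ Summable ρ ∧ (∑' i, ρ i = 1) ∧ Summable fun i => w i * ρ i

theorem IsProbFiniteExpectation.mem_Icc {ι : Type*} {w ρ : ι → ℝ}
    (hρ : IsProbFiniteExpectation w ρ) : ρ ∈ Set.Icc 0 1 := by
  obtain ⟨hρ_nonneg, hρ_sum, hρ_tsum, -⟩ := hρ
  exact ⟨hρ_nonneg, fun i => (hρ_sum.le_tsum i fun k _ => hρ_nonneg k).trans_eq hρ_tsum⟩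

theorem IsProbFiniteExpectation.of_tendsto {α ι : Type*} {l : Filter α} [l.NeBot]
    {w ρ : ι → ℝ} {u : α → ι → ℝ} {C : ℝ} (hw : ∀ i, 0 ≤ w i)
    (hw_top : Tendsto w cofinite atTop) (hu : ∀ j, IsProbFiniteExpectation w (u j))
    (hC : ∀ j, ∑' i, w i * u j i ≤ C) (hlim : ∀ i, Tendsto (fun j => u j i) l (𝓝 (ρ i))) :
    IsProbFiniteExpectation w ρ := by
  choose hu_nonneg hu_sum hu_tsum hu_wsum using hu
  have hρ : HasSum ρ 1 := hasSum_of_tendsto_of_tsum_mul_le hw hw_top hu_nonneg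
    (fun j => (hu_sum j).hasSum_iff.2 (hu_tsum j)) hu_wsum hC hlim
  have hwρ : Summable fun i => w i * ρ i := summable_of_tendsto_of_tsum_le
    (fun j i => mul_nonneg (hw i) (hu_nonneg j i)) hu_wsum hC fun i => (hlim i).const_mul (w i)
  exact ⟨fun i => ge_of_tendsto' (hlim i) fun j => hu_nonneg j i, hρ.summable, hρ.tsum_eq, hwρ⟩

theorem IsDTight.exists_tsum_abs_mul_le {F : Set (ℤ → ℝ)} (hF : IsDTight F) :
    ∃ C : ℝ, ∀ ω ∈ F, ∑' n : ℤ, |(n : ℝ)| * ω n ≤ C := by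
  obtain ⟨hprob, htail⟩ := hF
  obtain ⟨N, hN⟩ := htail 1 one_pos
  refine ⟨1 + N, fun ω hω => ?_⟩
  obtain ⟨hω_nonneg, hω_sum, hω_tsum, hω_wsum⟩ := hprob ω hω
  have hball : ∀ n ∉ {n : ℤ | (N : ℤ) < |n|}, |(n : ℝ)| ≤ N := fun n hn => by
    exact_mod_cast not_lt.1 hn
  calc ∑' n : ℤ, |(n : ℝ)| * ω n
      ≤ (∑' n : {n : ℤ | (N : ℤ) < |n|}, |((n : ℤ) : ℝ)| * ω n) + N * ∑' n, ω n :=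
        tsum_mul_le_tsum_subtype_add_of_le N.cast_nonneg hball hω_nonneg hω_sum hω_wsum
    _ ≤ 1 + N := by
        rw [hω_tsum, mul_one]
        gcongr
        exact hN ω hω

theorem dtight_seq_has_pointwise_convergent_subseq_general {ι : Type*} {w : ι → ℝ}
    (hw : ∀ i, 0 ≤ w i) (hw_top : Tendsto w cofinite atTop) {u : ℕ → ι → ℝ} {C : ℝ}
    (hu : ∀ j, IsProbFiniteExpectation w (u j)) (hC : ∀ j, ∑' i, w i * u j i ≤ C) :
    ∃ φ : ℕ → ℕ, StrictMono φ ∧ ∃ ρ : ι → ℝ,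
      (∀ i, Tendsto (fun j => u (φ j) i) atTop (𝓝 (ρ i))) ∧ IsProbFiniteExpectation w ρ := by
  have : Countable ι := countable_of_tendsto_cofinite_atTop hw_top
  obtain ⟨ρ, -, φ, hφ, hlim⟩ := isCompact_Icc.tendsto_subseq fun j => (hu j).mem_Icc
  rw [tendsto_pi_nhds] at hlim
  exact ⟨φ, hφ, ρ, hlim,
    .of_tendsto hw hw_top (fun j => hu (φ j)) (fun j => hC (φ j)) hlim⟩

/-- every sequence in a `D`-tight set of probability distributions on `ℤ`
with finite first moment admits a subsequence converging pointwise to a probability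
distribution on `ℤ`, which again has finite first moment. -/
theorem dtight_seq_has_pointwise_convergent_subseq
    (F : Set (ℤ → ℝ)) (hF : IsDTight F)
    (ρseq : ℕ → ℤ → ℝ) (hρseq : ∀ j : ℕ, ρseq j ∈ F) :
    ∃ φ : ℕ → ℕ, StrictMono φ ∧ ∃ ρ : ℤ → ℝ,
      (∀ n : ℤ, Filter.Tendsto (fun j : ℕ => ρseq (φ j) n) Filter.atTop (nhds (ρ n))) ∧
      IsProbFiniteMoment ρ := by
  obtain ⟨C, hC⟩ := hF.exists_tsum_abs_mul_le
  exact dtight_seq_has_pointwise_convergent_subseq_general (fun _ => abs_nonneg _)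
    (tendsto_norm_comp_cofinite_atTop_of_isClosedEmbedding Int.isClosedEmbedding_coe_real)
    (fun j => hF.1 _ (hρseq j)) fun j => hC _ (hρseq j)
end

section
/- Let F be a D-tight set of probability distributions on ℤ with finite first moment, let (ρ_j) be a sequence of elements of F, and let ρ be a probability distribution on ℤ such that ρ_j converges to ρ pointwise: for every n ∈ ℤ, (ρ_j) n → ρ n. Then ρ has finite first moment and ρ_j converges to ρ in Wasserstein distance: for every ε > 0 there exists J such that for every j ≥ J there is a coupling μ of ρ_j and ρ with ∑' p : ℤ × ℤ, μ p * |p.1 − p.2| ≤ ε. (On D-tight sets the Wasserstein-W₁ topology coincides with the weak* topology.) -/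
/-!
Two distributions `ρ`, `ω` of equal mass can be coupled by leaving the common part `ρ ⊓ ω` in place
and transporting the excess `(ρ - ω)⁺` to the deficit `(ρ - ω)⁻` by a normalised product. Routing
this transport through a base point `x₀`, the triangle inequality bounds its cost by
`∑' x, dist x x₀ * |ρ x - ω x|`. Tightness of the first moments makes the moment densities
`dist x x₀ * ρ x` uniformly small off a finite set, hence also those of the pointwise limit, and
on a finite set pointwise convergence is convergence in `ℓ¹`; so the cost tends to zero.
-/

open Filter Topology

section UniformTails

variable {ι α E : Type*} [SeminormedAddCommGroup E] {l : Filter ι}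

/-- The `ℓ¹` norm of `f` off the finite set `s` is at most `ε`. It is expressed by finite partial
sums, so that it passes to pointwise limits and needs no prior summability of `f`. -/
def NormTailLE (s : Finset α) (ε : ℝ) (f : α → E) : Prop :=
  ∀ t : Finset α, Disjoint t s → ∑ x ∈ t, ‖f x‖ ≤ ε

/-- The family `f` is uniformly summable: its `ℓ¹` tails are uniformly small off finite sets. For
the moment densities of a family of distributions this is tightness of the first moments. -/
def UniformlySummable (f : ι → α → E) : Prop :=
  ∀ ε : ℝ, 0 < ε → ∃ s : Finset α, ∀ i, NormTailLE s ε (f i)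

namespace NormTailLE

variable {s : Finset α} {δ ε : ℝ} {f g : α → E}

lemma sub (hf : NormTailLE s δ f) (hg : NormTailLE s ε g) : NormTailLE s (δ + ε) (f - g) :=
  fun t hts => calc
    ∑ x ∈ t, ‖f x - g x‖ ≤ ∑ x ∈ t, (‖f x‖ + ‖g x‖) :=
      Finset.sum_le_sum fun x _ => norm_sub_le (f x) (g x)
    _ = ∑ x ∈ t, ‖f x‖ + ∑ x ∈ t, ‖g x‖ := Finset.sum_add_distrib
    _ ≤ δ + ε := add_le_add (hf t hts) (hg t hts)

lemma of_tendsto [l.NeBot] {F : ι → α → E} (hF : ∀ i, NormTailLE s ε (F i))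
    (hlim : ∀ x, Tendsto (F · x) l (𝓝 (f x))) : NormTailLE s ε f :=
  fun t hts => le_of_tendsto' (tendsto_finsetSum t fun x _ => (hlim x).norm) fun i => hF i t hts

lemma sum_norm_le (hf : NormTailLE s ε f) (t : Finset α) :
    ∑ x ∈ t, ‖f x‖ ≤ ∑ x ∈ s, ‖f x‖ + ε := by
  classical
  calc
    ∑ x ∈ t, ‖f x‖ = ∑ x ∈ t ∩ s, ‖f x‖ + ∑ x ∈ t \ s, ‖f x‖ :=
      (Finset.sum_inter_add_sum_sdiff t s _).symm
    _ ≤ ∑ x ∈ s, ‖f x‖ + ε := by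
      gcongr
      · exact Finset.inter_subset_right
      · exact hf _ Finset.sdiff_disjoint

lemma summable_norm (hf : NormTailLE s ε f) : Summable fun x => ‖f x‖ :=
  summable_of_sum_le (fun _ => norm_nonneg _) hf.sum_norm_le

lemma tsum_norm_le (hf : NormTailLE s ε f) : ∑' x, ‖f x‖ ≤ ∑ x ∈ s, ‖f x‖ + ε :=
  Real.tsum_le_of_sum_le (fun _ => norm_nonneg _) hf.sum_norm_le

end NormTailLE

namespace UniformlySummable

variable {f : ι → α → E} {g : α → E}

lemma summable_norm_of_tendsto [l.NeBot] (hf : UniformlySummable f)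
    (hlim : ∀ x, Tendsto (f · x) l (𝓝 (g x))) : Summable fun x => ‖g x‖ :=
  let ⟨_, hs⟩ := hf 1 one_pos
  (NormTailLE.of_tendsto hs hlim).summable_norm

lemma eventually_tsum_norm_sub_le [l.NeBot] (hf : UniformlySummable f)
    (hlim : ∀ x, Tendsto (f · x) l (𝓝 (g x))) {ε : ℝ} (hε : 0 < ε) :
    ∀ᶠ i in l, Summable (fun x => ‖f i x - g x‖) ∧ ∑' x, ‖f i x - g x‖ ≤ ε := by
  obtain ⟨s, hs⟩ := hf (ε / 3) (by positivity)
  have htail (i : ι) : NormTailLE s (ε / 3 + ε / 3) (f i - g) :=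
    (hs i).sub (.of_tendsto hs hlim)
  have hcore : Tendsto (fun i => ∑ x ∈ s, ‖f i x - g x‖) l (𝓝 0) := by
    simpa using tendsto_finsetSum s fun x _ => ((hlim x).sub_const (g x)).norm
  filter_upwards [hcore.eventually_le_const (show 0 < ε / 3 by positivity)] with i hi
  refine ⟨(htail i).summable_norm, ?_⟩
  calc
    ∑' x, ‖f i x - g x‖ ≤ ∑ x ∈ s, ‖f i x - g x‖ + (ε / 3 + ε / 3) := (htail i).tsum_norm_le
    _ ≤ ε := by linarith

end UniformlySummable

end UniformTails

section LatticeOrderedGroup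

variable {G : Type*} [Lattice G] [AddCommGroup G] [AddLeftMono G]

lemma posPart_le_abs (a : G) : a⁺ ≤ |a| := sup_le (le_abs_self a) (abs_nonneg a)

lemma negPart_le_abs (a : G) : a⁻ ≤ |a| := sup_le (neg_le_abs a) (abs_nonneg a)

lemma inf_add_posPart_sub (a b : G) : a ⊓ b + (a - b)⁺ = a := by
  rw [inf_eq_sub_posPart_sub, sub_add_cancel]

lemma inf_add_negPart_sub (a b : G) : a ⊓ b + (a - b)⁻ = b := by
  rw [← posPart_neg, neg_sub, inf_comm, inf_add_posPart_sub]

end LatticeOrderedGroup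

section Couplings

variable {α β : Type*}

/-- `μ` is a coupling of the nonnegative densities `ρ` and `ω` on arbitrary discrete spaces. The
marginals are given by `HasSum`, which makes couplings additive without side conditions. -/
structure IsDiscreteCoupling_s15 (ρ : α → ℝ) (ω : β → ℝ) (μ : α × β → ℝ) : Prop where
  nonneg : 0 ≤ μ
  hasSum_left : ∀ x, HasSum (fun y => μ (x, y)) (ρ x)
  hasSum_right : ∀ y, HasSum (fun x => μ (x, y)) (ω y)

namespace IsDiscreteCoupling_s15

lemma add {ρ₁ ρ₂ : α → ℝ} {ω₁ ω₂ : β → ℝ} {μ₁ μ₂ : α × β → ℝ}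
    (h₁ : IsDiscreteCoupling_s15 ρ₁ ω₁ μ₁) (h₂ : IsDiscreteCoupling_s15 ρ₂ ω₂ μ₂) :
    IsDiscreteCoupling_s15 (ρ₁ + ρ₂) (ω₁ + ω₂) (μ₁ + μ₂) where
  nonneg := add_nonneg h₁.nonneg h₂.nonneg
  hasSum_left x := (h₁.hasSum_left x).add (h₂.hasSum_left x)
  hasSum_right y := (h₁.hasSum_right y).add (h₂.hasSum_right y)

lemma summable {ρ : α → ℝ} {ω : β → ℝ} {μ : α × β → ℝ} (h : IsDiscreteCoupling_s15 ρ ω μ)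
    (hρ : Summable ρ) : Summable μ :=
  (summable_prod_of_nonneg h.nonneg).2
    ⟨fun x => (h.hasSum_left x).summable, by simpa only [(h.hasSum_left _).tsum_eq] using hρ⟩

lemma isCoupling {ρ ω : ℤ → ℝ} {μ : ℤ × ℤ → ℝ} (h : IsDiscreteCoupling_s15 ρ ω μ)
    (hρ : Summable ρ) : IsCoupling ρ ω μ :=
  ⟨h.summable hρ, h.nonneg, fun m => (h.hasSum_left m).tsum_eq, fun n => (h.hasSum_right n).tsum_eq⟩

end IsDiscreteCoupling_s15

/-- The coupling of `c` with itself that moves no mass. -/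
noncomputable def diagonalCoupling (c : α → ℝ) : α × α → ℝ :=
  (Set.diagonal α).indicator fun p => c p.1

lemma isDiscreteCoupling_diagonalCoupling {c : α → ℝ} (hc : 0 ≤ c) :
    IsDiscreteCoupling_s15 c c (diagonalCoupling c) where
  nonneg := Set.indicator_nonneg fun p _ => hc p.1
  hasSum_left x := by
    simpa [diagonalCoupling] using
      hasSum_single (f := fun y => diagonalCoupling c (x, y)) x fun y hy => by
        simp [diagonalCoupling, hy.symm]
  hasSum_right y := by
    simpa [diagonalCoupling] using
      hasSum_single (f := fun x => diagonalCoupling c (x, y)) y fun x hx => by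
        simp [diagonalCoupling, hx]

lemma diagonalCoupling_mul_dist [PseudoMetricSpace α] (c : α → ℝ) (p : α × α) :
    diagonalCoupling c p * dist p.1 p.2 = 0 := by
  by_cases hp : p ∈ Set.diagonal α
  · rw [Set.mem_diagonal_iff.1 hp, dist_self, mul_zero]
  · rw [diagonalCoupling, Set.indicator_of_notMem hp, zero_mul]

/-- The independent coupling of two densities `u` and `v` of common mass `s`. For `s = 0` the
division yields `0`, which is the correct coupling since then `u` and `v` vanish. -/
noncomputable def productCoupling (u : α → ℝ) (v : β → ℝ) (s : ℝ) : α × β → ℝ :=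
  fun p => u p.1 * v p.2 / s

lemma productCoupling_nonneg {u : α → ℝ} {v : β → ℝ} {s : ℝ} (hu : 0 ≤ u) (hv : 0 ≤ v)
    (hs : 0 ≤ s) : 0 ≤ productCoupling u v s :=
  fun p => div_nonneg (mul_nonneg (hu p.1) (hv p.2)) hs

lemma isDiscreteCoupling_productCoupling {u : α → ℝ} {v : β → ℝ} {s : ℝ} (hu : 0 ≤ u)
    (hv : 0 ≤ v) (hus : HasSum u s) (hvs : HasSum v s) :
    IsDiscreteCoupling_s15 u v (productCoupling u v s) where
  nonneg := productCoupling_nonneg hu hv (hus.nonneg hu)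
  hasSum_left x := by
    have hux : s = 0 → u x = 0 := by
      rintro rfl
      exact congrFun ((hasSum_zero_iff_of_nonneg hu).1 hus) x
    simpa only [productCoupling, mul_div_cancel_of_imp hux] using (hvs.mul_left (u x)).div_const s
  hasSum_right y := by
    have hvy : s = 0 → v y = 0 := by
      rintro rfl
      exact congrFun ((hasSum_zero_iff_of_nonneg hv).1 hvs) y
    simpa only [productCoupling, mul_comm s, mul_div_cancel_of_imp hvy] using
      (hus.mul_right (v y)).div_const s

lemma hasSum_productCoupling {u : α → ℝ} {v : β → ℝ} {a b s : ℝ} (hu : 0 ≤ u) (hv : 0 ≤ v)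
    (hua : HasSum u a) (hvb : HasSum v b) : HasSum (productCoupling u v s) (a * b / s) :=
  (hua.mul hvb (hua.summable.mul_of_nonneg hvb.summable hu hv)).div_const s

lemma eq_zero_of_hasSum_mul {u w : α → ℝ} {A : ℝ} (hu : 0 ≤ u) (hu0 : HasSum u 0)
    (hA : HasSum (fun x => w x * u x) A) : A = 0 := by
  obtain rfl : u = 0 := (hasSum_zero_iff_of_nonneg hu).1 hu0
  exact hA.unique (by simp)

lemma exists_hasSum_posPart_negPart {f : α → ℝ} (hf : HasSum f 0) :
    ∃ s, HasSum f⁺ s ∧ HasSum f⁻ s := by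
  have hpos : Summable f⁺ :=
    .of_nonneg_of_le (posPart_nonneg f) (fun x => posPart_le_abs (f x)) hf.summable.abs
  have hneg : f⁻ = f⁺ - f := eq_sub_of_add_eq' (sub_eq_iff_eq_add.1 (posPart_sub_negPart f)).symm
  refine ⟨∑' x, f⁺ x, hpos.hasSum, ?_⟩
  rw [hneg, ← sub_zero (∑' x, f⁺ x)]
  exact hpos.hasSum.sub hf

section Cost

variable [PseudoMetricSpace α] (x₀ : α)

lemma productCoupling_mul_dist_le {u v : α → ℝ} {s : ℝ} (hu : 0 ≤ u) (hv : 0 ≤ v) (hs : 0 ≤ s)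
    (p : α × α) :
    productCoupling u v s p * dist p.1 p.2 ≤
      productCoupling (fun x => dist x x₀ * u x) v s p +
        productCoupling u (fun x => dist x x₀ * v x) s p := calc
  productCoupling u v s p * dist p.1 p.2
      ≤ productCoupling u v s p * (dist p.1 x₀ + dist p.2 x₀) :=
    mul_le_mul_of_nonneg_left (dist_triangle_right _ _ _) (productCoupling_nonneg hu hv hs p)
  _ = _ := by simp only [productCoupling]; ring

lemma productCoupling_cost_le {u v : α → ℝ} {s A B : ℝ} (hu : 0 ≤ u) (hv : 0 ≤ v)
    (hus : HasSum u s) (hvs : HasSum v s) (hA : HasSum (fun x => dist x x₀ * u x) A)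
    (hB : HasSum (fun x => dist x x₀ * v x) B) :
    Summable (fun p : α × α => productCoupling u v s p * dist p.1 p.2) ∧
      ∑' p : α × α, productCoupling u v s p * dist p.1 p.2 ≤ A + B := by
  have hs : 0 ≤ s := hus.nonneg hu
  have hsA : s = 0 → A = 0 := by rintro rfl; exact eq_zero_of_hasSum_mul hu hus hA
  have hsB : s = 0 → B = 0 := by rintro rfl; exact eq_zero_of_hasSum_mul hv hvs hB
  have hbound : HasSum (fun p => productCoupling (fun x => dist x x₀ * u x) v s p +
      productCoupling u (fun x => dist x x₀ * v x) s p) (A + B) := by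
    simpa only [mul_comm s B, mul_div_cancel_of_imp hsA, mul_div_cancel_of_imp hsB] using
      (hasSum_productCoupling (s := s) (fun x => mul_nonneg dist_nonneg (hu x)) hv hA hvs).add
        (hasSum_productCoupling (s := s) hu (fun x => mul_nonneg dist_nonneg (hv x)) hus hB)
  have hle := productCoupling_mul_dist_le x₀ hu hv hs
  have hsummable : Summable fun p : α × α => productCoupling u v s p * dist p.1 p.2 :=
    .of_nonneg_of_le (fun p => mul_nonneg (productCoupling_nonneg hu hv hs p) dist_nonneg) hle
      hbound.summable
  exact ⟨hsummable, hasSum_le hle hsummable.hasSum hbound⟩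

lemma exists_isDiscreteCoupling_cost_le {ρ ω : α → ℝ} {m : ℝ} (hρ0 : 0 ≤ ρ) (hω0 : 0 ≤ ω)
    (hρ : HasSum ρ m) (hω : HasSum ω m)
    (hmoment : Summable fun x => dist x x₀ * |ρ x - ω x|) :
    ∃ μ : α × α → ℝ, IsDiscreteCoupling_s15 ρ ω μ ∧
      Summable (fun p : α × α => μ p * dist p.1 p.2) ∧
      ∑' p : α × α, μ p * dist p.1 p.2 ≤ ∑' x, dist x x₀ * |ρ x - ω x| := by
  obtain ⟨s, hs_pos, hs_neg⟩ : ∃ s, HasSum (ρ - ω)⁺ s ∧ HasSum (ρ - ω)⁻ s :=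
    exists_hasSum_posPart_negPart (sub_self m ▸ hρ.sub hω)
  have hpos : Summable fun x => dist x x₀ * (ρ - ω)⁺ x :=
    .of_nonneg_of_le (fun x => mul_nonneg dist_nonneg (posPart_nonneg (ρ x - ω x)))
      (fun x => mul_le_mul_of_nonneg_left (posPart_le_abs (ρ x - ω x)) dist_nonneg) hmoment
  have hneg : Summable fun x => dist x x₀ * (ρ - ω)⁻ x :=
    .of_nonneg_of_le (fun x => mul_nonneg dist_nonneg (negPart_nonneg (ρ x - ω x)))
      (fun x => mul_le_mul_of_nonneg_left (negPart_le_abs (ρ x - ω x)) dist_nonneg) hmoment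
  have hsplit : ∑' x, dist x x₀ * |ρ x - ω x| =
      ∑' x, dist x x₀ * (ρ - ω)⁺ x + ∑' x, dist x x₀ * (ρ - ω)⁻ x := by
    rw [← hpos.tsum_add hneg]
    exact tsum_congr fun x => by rw [← posPart_add_negPart (ρ x - ω x), mul_add]; rfl
  refine ⟨diagonalCoupling (ρ ⊓ ω) + productCoupling (ρ - ω)⁺ (ρ - ω)⁻ s, ?_, ?_⟩
  · simpa only [inf_add_posPart_sub, inf_add_negPart_sub] using
      (isDiscreteCoupling_diagonalCoupling (le_inf hρ0 hω0)).add
        (isDiscreteCoupling_productCoupling (posPart_nonneg _) (negPart_nonneg _) hs_pos hs_neg)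
  · simp only [Pi.add_apply, add_mul, diagonalCoupling_mul_dist, zero_add, hsplit]
    exact productCoupling_cost_le x₀ (posPart_nonneg _) (negPart_nonneg _) hs_pos hs_neg
      hpos.hasSum hneg.hasSum

end Cost

end Couplings

lemma IsDTight.uniformlySummable {ι : Type*} {F : Set (ℤ → ℝ)} (hF : IsDTight F)
    {ρ : ι → ℤ → ℝ} (hρ : ∀ i, ρ i ∈ F) : UniformlySummable fun i n => dist n 0 * ρ i n := by
  intro ε hε
  obtain ⟨N, hN⟩ := hF.2 ε hε
  refine ⟨Finset.Icc (-N) N, fun i t ht => ?_⟩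
  obtain ⟨hnonneg, -, -, hmoment⟩ := hF.1 _ (hρ i)
  have hfar : ∀ n ∈ t, (N : ℤ) < |n| := fun n hn => by
    simpa [← abs_le] using Finset.disjoint_left.1 ht hn
  calc
    ∑ n ∈ t, ‖dist n 0 * ρ i n‖ = ∑ n ∈ t, |(n : ℝ)| * ρ i n := by
      simp [Int.norm_eq_abs, abs_of_nonneg (hnonneg _)]
    _ = ∑ n ∈ t.subtype fun n => (N : ℤ) < |n|, |((n : ℤ) : ℝ)| * ρ i n :=
      (Finset.sum_subtype_of_mem (fun n : ℤ => |(n : ℝ)| * ρ i n) hfar).symm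
    _ ≤ ∑' n : {n : ℤ // (N : ℤ) < |n|}, |((n : ℤ) : ℝ)| * ρ i n :=
      (hmoment.subtype {n : ℤ | (N : ℤ) < |n|}).sum_le_tsum _
        fun n _ => mul_nonneg (abs_nonneg _) (hnonneg n)
    _ ≤ ε := hN _ (hρ i)

theorem dtight_pointwise_tendsto_implies_wasserstein_tendsto_general
    {ι α : Type*} [PseudoMetricSpace α] (x₀ : α) {l : Filter ι} [l.NeBot]
    {ρseq : ι → α → ℝ} {ρ : α → ℝ} {m : ℝ}
    (hnonneg : ∀ i, 0 ≤ ρseq i) (hmass : ∀ i, HasSum (ρseq i) m) (hρmass : HasSum ρ m)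
    (htight : UniformlySummable fun i x => dist x x₀ * ρseq i x)
    (hptwise : ∀ x, Tendsto (ρseq · x) l (𝓝 (ρ x))) :
    Summable (fun x => dist x x₀ * ρ x) ∧
      ∀ ε : ℝ, 0 < ε → ∀ᶠ i in l, ∃ μ : α × α → ℝ, IsDiscreteCoupling_s15 (ρseq i) ρ μ ∧
        Summable (fun p : α × α => μ p * dist p.1 p.2) ∧
        ∑' p : α × α, μ p * dist p.1 p.2 ≤ ε := by
  have hρ0 : 0 ≤ ρ := fun x => ge_of_tendsto' (hptwise x) fun i => hnonneg i x
  have hlim (x : α) : Tendsto (fun i => dist x x₀ * ρseq i x) l (𝓝 (dist x x₀ * ρ x)) :=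
    (hptwise x).const_mul _
  have hnorm (i : ι) (x : α) :
      ‖dist x x₀ * ρseq i x - dist x x₀ * ρ x‖ = dist x x₀ * |ρseq i x - ρ x| := by
    rw [← mul_sub, norm_mul, Real.norm_of_nonneg dist_nonneg, Real.norm_eq_abs]
  refine ⟨(htight.summable_norm_of_tendsto hlim).of_norm, fun ε hε => ?_⟩
  filter_upwards [htight.eventually_tsum_norm_sub_le hlim hε] with i hi
  simp only [hnorm] at hi
  obtain ⟨μ, hμ, hsummable, hcost⟩ :=
    exists_isDiscreteCoupling_cost_le x₀ (hnonneg i) hρ0 (hmass i) hρmass hi.1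
  exact ⟨μ, hμ, hsummable, hcost.trans hi.2⟩

/-- on a `D`-tight set, pointwise (weak*) convergence of a sequence of
probability distributions on `ℤ` to a probability distribution `ρ` implies that `ρ`
has finite first moment and that the sequence converges to `ρ` in the Wasserstein
distance `W₁`. -/
theorem dtight_pointwise_tendsto_implies_wasserstein_tendsto
    (F : Set (ℤ → ℝ)) (hF : IsDTight F)
    (ρseq : ℕ → ℤ → ℝ) (hρseq : ∀ j : ℕ, ρseq j ∈ F)
    (ρ : ℤ → ℝ)
    (hρpos : ∀ n : ℤ, 0 ≤ ρ n) (hρsum : Summable ρ) (hρ1 : ∑' n : ℤ, ρ n = 1)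
    (hptwise : ∀ n : ℤ, Filter.Tendsto (fun j : ℕ => ρseq j n) Filter.atTop (nhds (ρ n))) :
    Summable (fun n : ℤ => |(n : ℝ)| * ρ n) ∧
      ∀ ε : ℝ, 0 < ε → ∃ J : ℕ, ∀ j : ℕ, J ≤ j →
        ∃ μ : ℤ × ℤ → ℝ, IsCoupling (ρseq j) ρ μ ∧
          ∑' p : ℤ × ℤ, μ p * |(p.1 : ℝ) - (p.2 : ℝ)| ≤ ε := by
  obtain ⟨hmoment, hcoupling⟩ :=
    dtight_pointwise_tendsto_implies_wasserstein_tendsto_general (0 : ℤ)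
      (fun j => (hF.1 _ (hρseq j)).1)
      (fun j => by obtain ⟨-, hsum, hmass, -⟩ := hF.1 _ (hρseq j); exact hmass ▸ hsum.hasSum)
      (hρ1 ▸ hρsum.hasSum) (hF.uniformlySummable hρseq) hptwise
  refine ⟨by simpa [Int.norm_eq_abs] using hmoment, fun ε hε => ?_⟩
  obtain ⟨J, hJ⟩ := eventually_atTop.1 (hcoupling ε hε)
  refine ⟨J, fun j hj => ?_⟩
  obtain ⟨μ, hμ, -, hcost⟩ := hJ j hj
  exact ⟨μ, hμ.isCoupling (hF.1 _ (hρseq j)).2.1, hcost⟩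
end

section
/- Let A be a complex C*-algebra and let η be a 2π-periodic norm-continuous one-parameter group of *-automorphisms of A. Let b, c ∈ A be such that for every p ∈ ℝ the map k ↦ η k b has derivative η p c at p (i.e. HasDerivAt (fun k => η k b) (η p c) p); c plays the role of ∂b. Then ‖b − (2π)⁻¹ • ∫ k in (-π)..π, η k b‖ ^ 2 ≤ (π ^ 2 / 3) * ‖(2π)⁻¹ • ∫ k in (-π)..π, η k (c * star c)‖, where the integrals are Bochner integrals in A (the integrands are continuous on a compact interval, hence integrable). -/
/-!
The orbit `f k = η k b` is a `2π`-periodic curve with `f 0 = b` and derivative `f' k = η k c`.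
Integrating by parts over a period against the weight `k - π` gives
`b - E(b) = (2π)⁻¹ ∫₀^{2π} (k - π) f'(k) dk`, and the Cauchy-Schwarz inequality for `A`-valued
integrals bounds the squared norm of the right-hand side by the mean of `(k - π)²`, which is
`π² / 3`, times `‖E(c c*)‖`.
-/

open MeasureTheory Set
open scoped Interval

section CauchySchwarz

variable {α A : Type*} {mα : MeasurableSpace α} {μ : Measure α} [NonUnitalCStarAlgebra A]
  {g : α → ℝ} {x : α → A}

lemma memLp_two_iff_integrable_mul_star_self (hx : AEStronglyMeasurable x μ) :
    MemLp x 2 μ ↔ Integrable (fun a ↦ x a * star (x a)) μ := by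
  have hxx : AEStronglyMeasurable (fun a ↦ x a * star (x a)) μ := hx.mul hx.star
  rw [memLp_two_iff_integrable_sq_norm hx, ← integrable_norm_iff hxx]
  simp only [CStarRing.norm_self_mul_star, sq]

lemma integral_smul_sub_smul_mul_star_self (hg : MemLp g 2 μ) (hx : MemLp x 2 μ) (s : ℝ) (y : A) :
    ∫ a, (s • x a - g a • y) * star (s • x a - g a • y) ∂μ =
      s ^ 2 • ∫ a, x a * star (x a) ∂μ
        - s • ((∫ a, g a • x a ∂μ) * star y + y * star (∫ a, g a • x a ∂μ))
        + (∫ a, g a ^ 2 ∂μ) • (y * star y) := by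
  have hxx : Integrable (fun a ↦ x a * star (x a)) μ :=
    (memLp_two_iff_integrable_mul_star_self hx.1).mp hx
  have hgx : Integrable (fun a ↦ g a • x a) μ :=
    memLp_one_iff_integrable.mp (MemLp.smul (𝕜 := ℝ) hx hg)
  have hgx_star : Integrable (fun a ↦ star (g a • x a)) μ :=
    (starL' ℝ : A ≃L[ℝ] A).integrable_comp_iff.mpr hgx
  have hgxy : Integrable (fun a ↦ (g a • x a) * star y) μ :=
    ((ContinuousLinearMap.mul ℝ A).flip (star y)).integrable_comp hgx
  have hygx : Integrable (fun a ↦ y * star (g a • x a)) μ :=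
    (ContinuousLinearMap.mul ℝ A y).integrable_comp hgx_star
  have hgyy : Integrable (fun a ↦ g a ^ 2 • (y * star y)) μ := hg.integrable_sq.smul_const _
  have expand (a : α) : (s • x a - g a • y) * star (s • x a - g a • y) =
      s ^ 2 • (x a * star (x a)) - s • ((g a • x a) * star y + y * star (g a • x a))
        + g a ^ 2 • (y * star y) := by
    simp only [star_sub, star_smul, star_trivial, sub_mul, mul_sub, smul_mul_assoc, mul_smul_comm]
    module
  have integral_star : ∫ a, star (g a • x a) ∂μ = star (∫ a, g a • x a ∂μ) :=
    (starL' ℝ : A ≃L[ℝ] A).integral_comp_comm _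
  simp_rw [expand]
  rw [integral_add ?_ hgyy, integral_sub (hxx.fun_smul _) ((hgxy.fun_add hygx).fun_smul _),
    integral_smul, integral_smul, integral_add hgxy hygx, integral_smul_const,
    integral_mul_const_of_integrable hgx, integral_const_mul_of_integrable hgx_star, integral_star]
  exact (hxx.smul _).sub ((hgxy.add hygx).smul _)

lemma integral_smul_mul_star_le [PartialOrder A] [StarOrderedRing A]
    (hg : MemLp g 2 μ) (hx : MemLp x 2 μ) :
    (∫ a, g a • x a ∂μ) * star (∫ a, g a • x a ∂μ) ≤
      (∫ a, g a ^ 2 ∂μ) • ∫ a, x a * star (x a) ∂μ := by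
  set G := ∫ a, g a ^ 2 ∂μ
  set Y := ∫ a, g a • x a ∂μ
  set P := ∫ a, x a * star (x a) ∂μ
  have hG_nonneg : 0 ≤ G := integral_nonneg fun a ↦ sq_nonneg (g a)
  obtain hG_zero | hG_pos := hG_nonneg.eq_or_lt
  · have hg_zero : (fun a ↦ g a ^ 2) =ᵐ[μ] 0 :=
      (integral_eq_zero_iff_of_nonneg (fun a ↦ sq_nonneg (g a)) hg.integrable_sq).mp hG_zero.symm
    have hY_zero : Y = 0 := integral_eq_zero_of_ae <| by
      filter_upwards [hg_zero] with a ha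
      simp [pow_eq_zero_iff two_ne_zero |>.mp ha]
    simp [hY_zero, ← hG_zero]
  · have h_nonneg : 0 ≤ G • (G • P - Y * star Y) := calc
      0 ≤ ∫ a, (G • x a - g a • Y) * star (G • x a - g a • Y) ∂μ :=
        integral_nonneg fun a ↦ mul_star_self_nonneg _
      _ = G • (G • P - Y * star Y) := by
        rw [integral_smul_sub_smul_mul_star_self hg hx]
        module
    exact sub_nonneg.mp ((smul_nonneg_iff_nonneg_of_pos_left hG_pos).mp h_nonneg)

lemma norm_integral_smul_sq_le (hg : MemLp g 2 μ) (hx : MemLp x 2 μ) :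
    ‖∫ a, g a • x a ∂μ‖ ^ 2 ≤ (∫ a, g a ^ 2 ∂μ) * ‖∫ a, x a * star (x a) ∂μ‖ := by
  let := CStarAlgebra.spectralOrder A
  have := CStarAlgebra.spectralOrderedRing A
  have hG_nonneg : 0 ≤ ∫ a, g a ^ 2 ∂μ := integral_nonneg fun a ↦ sq_nonneg (g a)
  have h := CStarAlgebra.norm_le_norm_of_nonneg_of_le (mul_star_self_nonneg _)
    (integral_smul_mul_star_le hg hx)
  rwa [CStarRing.norm_self_mul_star, ← sq, norm_smul, Real.norm_of_nonneg hG_nonneg] at h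

end CauchySchwarz

section Trapezoid

lemma intervalAverage_sub_midpoint_sq (a b : ℝ) :
    ⨍ t in a..b, (t - midpoint ℝ a b) ^ 2 = (b - a) ^ 2 / 12 := by
  rw [interval_average_eq_div, midpoint_eq_smul_add,
    intervalIntegral.integral_comp_sub_right (fun t ↦ t ^ 2), integral_pow]
  obtain rfl | hab := eq_or_ne a b
  · simp
  · have : b - a ≠ 0 := sub_ne_zero.mpr hab.symm
    simp only [invOf_eq_inv, smul_eq_mul]
    field_simp
    ring

variable {a b : ℝ}

lemma midpoint_sub_intervalAverage_eq {E : Type*} [NormedAddCommGroup E] [NormedSpace ℝ E]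
    [CompleteSpace E] {f f' : ℝ → E} (hab : a ≠ b) (hf : ContinuousOn f [[a, b]])
    (hderiv : ∀ t ∈ Ioo (min a b) (max a b), HasDerivAt f (f' t) t)
    (hf' : IntervalIntegrable f' volume a b) :
    midpoint ℝ (f a) (f b) - ⨍ t in a..b, f t = ⨍ t in a..b, (t - midpoint ℝ a b) • f' t := by
  have hba : b - a ≠ 0 := sub_ne_zero.mpr hab.symm
  have h_parts := intervalIntegral.integral_smul_deriv_eq_deriv_smul_of_hasDerivAt
    (u := fun t ↦ t - midpoint ℝ a b) (u' := fun _ ↦ 1) (by fun_prop) hf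
    (fun t _ ↦ (hasDerivAt_id t).sub_const _) hderiv (by simp) hf'
  have h_right : b - midpoint ℝ a b = (b - a) * 2⁻¹ := by
    simp [right_sub_midpoint, mul_comm]
  have h_left : a - midpoint ℝ a b = -((b - a) * 2⁻¹) := by
    rw [← h_right, ← neg_sub (midpoint ℝ a b), midpoint_sub_left, right_sub_midpoint]
  rw [interval_average_eq, interval_average_eq, h_parts, h_left, h_right, midpoint_eq_smul_add,
    invOf_eq_inv]
  simp only [one_smul, smul_sub, smul_smul, neg_smul, smul_neg, inv_mul_cancel_left₀ hba]
  module

lemma norm_midpoint_sub_intervalAverage_sq_le {A : Type*} [NonUnitalCStarAlgebra A]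
    {f f' : ℝ → A} (hab : a ≠ b) (hf : ContinuousOn f [[a, b]])
    (hderiv : ∀ t ∈ Ioo (min a b) (max a b), HasDerivAt f (f' t) t)
    (hf' : MemLp f' 2 (volume.restrict (Ι a b))) :
    ‖midpoint ℝ (f a) (f b) - ⨍ t in a..b, f t‖ ^ 2 ≤
      (b - a) ^ 2 / 12 * ‖⨍ t in a..b, f' t * star (f' t)‖ := by
  have h_inv_ne_top : ((volume.restrict (Ι a b)) univ)⁻¹ ≠ ⊤ := by
    simp [uIoc, lt_iff_le_and_ne, hab.symm]
  have h_weight : MemLp (fun t ↦ t - midpoint ℝ a b) 2 (volume.restrict (Ι a b)) := by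
    rw [memLp_two_iff_integrable_sq (by fun_prop)]
    exact (intervalIntegrable_iff (a := a) (b := b)).mp
      (Continuous.intervalIntegrable (by fun_prop) a b)
  have hf'_int : IntervalIntegrable f' volume a b :=
    have : IsFiniteMeasure (volume.restrict (Ι a b)) := Real.isFiniteMeasure_restrict_Ioc _ _
    intervalIntegrable_iff.mpr (hf'.integrable one_le_two)
  rw [midpoint_sub_intervalAverage_eq hab hf hderiv hf'_int, ← intervalAverage_sub_midpoint_sq]
  -- `⨍` is by definition the integral against the normalised measure.
  exact norm_integral_smul_sq_le (h_weight.smul_measure h_inv_ne_top)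
    (hf'.smul_measure h_inv_ne_top)

end Trapezoid

section Periodic

lemma periodic_of_hasDerivAt {𝕜 E : Type*} [NontriviallyNormedField 𝕜] [NormedAddCommGroup E]
    [NormedSpace 𝕜 E] {f f' : 𝕜 → E} {T : 𝕜} (hper : Function.Periodic f T)
    (hderiv : ∀ t, HasDerivAt f (f' t) t) : Function.Periodic f' T := fun t ↦ by
  have h_shift : HasDerivAt (fun s ↦ f (s + T)) (f' (t + T)) t :=
    (hderiv (t + T)).comp_add_const t T
  rw [hper.funext] at h_shift
  exact h_shift.unique (hderiv t)

lemma intervalAverage_add_eq_of_periodic {E : Type*} [NormedAddCommGroup E] [NormedSpace ℝ E]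
    {f : ℝ → E} {T : ℝ} (hper : Function.Periodic f T) (a b : ℝ) :
    ⨍ t in a..a + T, f t = ⨍ t in b..b + T, f t := by
  simp only [interval_average_eq, add_sub_cancel_left, hper.intervalIntegral_add_eq a b]

end Periodic

theorem norm_sub_expectation_sq_le_general {A : Type*} [NonUnitalCStarAlgebra A] {f f' : ℝ → A}
    {T : ℝ} (hT : T ≠ 0) (hper : Function.Periodic f T)
    (hderiv : ∀ t, HasDerivAt f (f' t) t) (a : ℝ)
    (hint : IntervalIntegrable (fun t ↦ f' t * star (f' t)) volume a (a + T)) (p : ℝ) :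
    ‖f p - ⨍ t in a..a + T, f t‖ ^ 2 ≤
      T ^ 2 / 12 * ‖⨍ t in a..a + T, f' t * star (f' t)‖ := by
  have hsq_per : Function.Periodic (fun t ↦ f' t * star (f' t)) T := fun t ↦ by
    simp only [periodic_of_hasDerivAt hper hderiv t]
  have hf'_meas : StronglyMeasurable f' :=
    (funext fun t ↦ (hderiv t).deriv) ▸ stronglyMeasurable_deriv f
  have hf' : MemLp f' 2 (volume.restrict (Ι p (p + T))) :=
    (memLp_two_iff_integrable_mul_star_self hf'_meas.aestronglyMeasurable).mpr <|
      intervalIntegrable_iff.mp (hsq_per.intervalIntegrable hT hint p (p + T))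
  have hf : Continuous f := continuous_iff_continuousAt.mpr fun t ↦ (hderiv t).continuousAt
  have h_trapezoid := norm_midpoint_sub_intervalAverage_sq_le (f := f) (by simpa using hT)
    hf.continuousOn (fun t _ ↦ hderiv t) hf'
  rwa [hper p, midpoint_self, add_sub_cancel_left, intervalAverage_add_eq_of_periodic hper p a,
    intervalAverage_add_eq_of_periodic hsq_per p a] at h_trapezoid

/-- for a `2π`-periodic norm-continuous one-parameter group `η` of
*-automorphisms of a complex C*-algebra `A` and elements `b, c ∈ A` with
`d/dk (η k b) = η p c` at every `p` (so `c = ∂b`), one has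
`‖b - E(b)‖² ≤ (π²/3) * ‖E(∂b (∂b)*)‖`, where `E(x) = (2π)⁻¹ ∫_{-π}^{π} η k x dk`. -/
theorem norm_sub_expectation_sq_le {A : Type*} [NormedRing A] [StarRing A] [CStarRing A]
    [NormedAlgebra ℂ A] [StarModule ℂ A] [CompleteSpace A]
    (η : ℝ → (A ≃⋆ₐ[ℂ] A))
    (hgrp : ∀ (k k' : ℝ) (a : A), η (k + k') a = η k (η k' a))
    (hper : ∀ k : ℝ, η (k + 2 * Real.pi) = η k)
    (hcont : ∀ a : A, Continuous fun k : ℝ => η k a)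
    (b c : A)
    (hderiv : ∀ p : ℝ, HasDerivAt (fun k : ℝ => η k b) (η p c) p) :
    ‖b - (2 * Real.pi)⁻¹ • ∫ k in (-Real.pi)..Real.pi, η k b‖ ^ 2 ≤
      (Real.pi ^ 2 / 3) * ‖(2 * Real.pi)⁻¹ • ∫ k in (-Real.pi)..Real.pi, η k (c * star c)‖ := by
  let : CStarAlgebra A := {}
  have hη₀ : η 0 b = b := EquivLike.injective (η 0) (by rw [← hgrp, add_zero])
  have hint : IntervalIntegrable (fun k ↦ η k c * star (η k c)) volume (-Real.pi)
      (-Real.pi + 2 * Real.pi) :=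
    ((hcont c).mul (hcont c).star).intervalIntegrable _ _
  have h_end : -Real.pi + 2 * Real.pi = Real.pi := by ring
  have h_const : (2 * Real.pi) ^ 2 / 12 = Real.pi ^ 2 / 3 := by ring
  simpa only [interval_average_eq, hη₀, h_end, h_const, sub_neg_eq_add, ← two_mul, ← map_star,
    ← map_mul] using norm_sub_expectation_sq_le_general Real.two_pi_pos.ne'
      (fun k ↦ by simp only [hper]) hderiv (-Real.pi) hint 0
end

section
/- Let A be a complex C*-algebra and let η be a 2π-periodic norm-continuous one-parameter group of *-automorphisms of A. Let b, c ∈ A be such that for every p ∈ ℝ the map k ↦ η k b has derivative η p c at p (i.e. HasDerivAt (fun k => η k b) (η p c) p). For an integer N ≥ 1 let F_N : ℝ → ℝ be the Fejér kernel, F_N k = ∑_{l = -(N-1)}^{N-1} (1 − |l| / N) * Real.cos (l * k), and let the Fejér approximant of order N be b_N := (2π)⁻¹ • ∫ k in (-π)..π, F_N k • η k b (a Bochner integral in A). Then ‖b − b_N‖ ≤ (π / Real.sqrt N) * ‖c‖ + (2 / Real.sqrt N) * ‖b‖. -/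
/-!
Since `F_N` has total mass `2π`, the error `b - b_N` is the average of `b - η_k b` against `F_N`.
Near `k = 0` the mean value inequality gives `‖b - η_k b‖ ≤ |k| ‖c‖`; away from `0` one uses the
trivial bound `2 ‖b‖` together with the decay `F_N k ≤ π² / (N k²)`, which comes from
`N F_N k = sin² (N k / 2) / sin² (k / 2)` and `|k| ≤ π |sin (k / 2)|`. Cutting at `|k| = π / √N`
balances the two contributions. This is an estimate for bounded Lipschitz curves in a Banach space,
applied to `k ↦ η_k b`.
-/

open MeasureTheory Real Set
open scoped NNReal

theorem norm_integral_smul_le_add_setIntegral {α E : Type*} [MeasurableSpace α] {μ : Measure α}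
    [NormedAddCommGroup E] [NormedSpace ℝ E] {K : α → ℝ} {g : α → E} {s : Set α} {ε B : ℝ}
    (hs : MeasurableSet s) (hK : Integrable K μ) (hK_nonneg : 0 ≤ᵐ[μ] K) (hε : 0 ≤ ε)
    (hg_compl : ∀ᵐ t ∂μ, t ∉ s → ‖g t‖ ≤ ε) (hg : ∀ᵐ t ∂μ, t ∈ s → ‖g t‖ ≤ B) :
    ‖∫ t, K t • g t ∂μ‖ ≤ ε * ∫ t, K t ∂μ + B * ∫ t in s, K t ∂μ := by
  have hbound : ∀ᵐ t ∂μ, ‖K t • g t‖ ≤ ε * K t + B * s.indicator K t := by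
    filter_upwards [hK_nonneg, hg_compl, hg] with t hKt htε htB
    rw [norm_smul, norm_of_nonneg hKt, mul_comm]
    by_cases ht : t ∈ s
    · rw [indicator_of_mem ht]
      exact le_add_of_nonneg_of_le (mul_nonneg hε hKt)
        (mul_le_mul_of_nonneg_right (htB ht) hKt)
    · rw [indicator_of_notMem ht, mul_zero, add_zero]
      exact mul_le_mul_of_nonneg_right (htε ht) hKt
  have hK_tail : Integrable (s.indicator K) μ := hK.indicator hs
  calc ‖∫ t, K t • g t ∂μ‖ ≤ ∫ t, ε * K t + B * s.indicator K t ∂μ :=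
        norm_integral_le_of_norm_le ((hK.const_mul ε).add (hK_tail.const_mul B)) hbound
    _ = ε * ∫ t, K t ∂μ + B * ∫ t in s, K t ∂μ := by
        rw [integral_add (hK.const_mul ε) (hK_tail.const_mul B), integral_const_mul,
          integral_const_mul, integral_indicator hs]

theorem sum_cos_mul_sin_half (n : ℕ) (k : ℝ) :
    (∑ l ∈ Finset.Icc (-n : ℤ) n, cos (l * k)) * sin (k / 2) = sin ((n + 1 / 2) * k) := by
  induction n with
  | zero => simp [div_eq_inv_mul]
  | succ n ih =>
    have hlow : (n + 1 / 2) * k = (n + 1) * k - k / 2 := by ring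
    have hhigh : (n + 1 + 1 / 2) * k = (n + 1) * k + k / 2 := by ring
    rw [Nat.cast_succ, Nat.cast_succ, Finset.sum_Icc_succ_eq_add_endpoints, add_mul, ih]
    push_cast
    rw [hlow, hhigh, neg_mul, cos_neg, sin_add, sin_sub]
    ring

theorem sin_add_half_mul_sin_half (x k : ℝ) :
    sin ((x + 1 / 2) * k) * sin (k / 2) = sin ((x + 1) * k / 2) ^ 2 - sin (x * k / 2) ^ 2 := by
  have hsum : (x + 1 / 2) * k = (x + 1) * k / 2 + x * k / 2 := by ring
  have hdiff : k / 2 = (x + 1) * k / 2 - x * k / 2 := by ring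
  rw [hsum, hdiff, sin_add, sin_sub]
  linear_combination sin ((x + 1) * k / 2) ^ 2 * cos_sq' (x * k / 2)
    - sin (x * k / 2) ^ 2 * cos_sq' ((x + 1) * k / 2)

theorem sum_sub_abs_mul_cos_mul_sin_half_sq (n : ℕ) (k : ℝ) :
    (∑ l ∈ Finset.Icc (-n : ℤ) n, (n - |(l : ℝ)|) * cos (l * k)) * sin (k / 2) ^ 2 =
      sin (n * k / 2) ^ 2 := by
  induction n with
  | zero => simp
  | succ n ih =>
    have hsplit : ∑ l ∈ Finset.Icc (-n : ℤ) n, (n + 1 - |(l : ℝ)|) * cos (l * k) =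
        ∑ l ∈ Finset.Icc (-n : ℤ) n, (n - |(l : ℝ)|) * cos (l * k) +
          ∑ l ∈ Finset.Icc (-n : ℤ) n, cos (l * k) := by
      rw [← Finset.sum_add_distrib]
      exact Finset.sum_congr rfl fun l _ ↦ by ring
    have habs : |(n : ℝ) + 1| = n + 1 := abs_of_nonneg (by positivity)
    rw [Nat.cast_succ, Nat.cast_succ, Finset.sum_Icc_succ_eq_add_endpoints, hsplit]
    push_cast
    rw [abs_neg, habs]
    linear_combination ih + sin (k / 2) * sum_cos_mul_sin_half n k
      + sin_add_half_mul_sin_half n k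

theorem sq_le_pi_sq_mul_sin_half_sq {k : ℝ} (hk : |k| ≤ π) :
    k ^ 2 ≤ π ^ 2 * sin (k / 2) ^ 2 := by
  have hjordan : 2 / π * |k / 2| ≤ |sin (k / 2)| :=
    mul_abs_le_abs_sin (by rw [abs_div, abs_two]; linarith)
  rw [← mul_pow, sq_le_sq, abs_mul, abs_of_pos pi_pos]
  calc |k| = π * (2 / π * |k / 2|) := by rw [abs_div, abs_two]; field_simp
    _ ≤ π * |sin (k / 2)| := by gcongr

/-- The Fejér kernel of order `N`, the average of the first `N` Dirichlet kernels; it is normalized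
to have integral `2π` over a period. -/
noncomputable def fejerKernel (N : ℕ) (k : ℝ) : ℝ :=
  ∑ l ∈ Finset.Icc (-(N : ℤ) + 1) ((N : ℤ) - 1),
    (1 - |(l : ℝ)| / (N : ℝ)) * cos ((l : ℝ) * k)

theorem continuous_fejerKernel (N : ℕ) : Continuous (fejerKernel N) := by
  unfold fejerKernel
  fun_prop

theorem fejerKernel_neg (N : ℕ) (k : ℝ) : fejerKernel N (-k) = fejerKernel N k := by
  simp only [fejerKernel, mul_neg, cos_neg]

theorem natCast_mul_fejerKernel (N : ℕ) (k : ℝ) :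
    N * fejerKernel N k = ∑ l ∈ Finset.Icc (-N : ℤ) N, (N - |(l : ℝ)|) * cos (l * k) := by
  have hsub : Finset.Icc (-(N : ℤ) + 1) ((N : ℤ) - 1) ⊆ Finset.Icc (-N : ℤ) N :=
    Finset.Icc_subset_Icc (by lia) (by lia)
  rw [fejerKernel, Finset.mul_sum, ← Finset.sum_subset hsub]
  · refine Finset.sum_congr rfl fun l hl ↦ ?_
    have hN : (N : ℝ) ≠ 0 := by
      rw [Finset.mem_Icc] at hl
      exact_mod_cast (by lia : N ≠ 0)
    field_simp
  · intro l hl hl'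
    have habs : |(l : ℝ)| = N := by
      rw [Finset.mem_Icc] at hl hl'
      exact_mod_cast (by grind : |l| = N)
    rw [habs, sub_self, zero_mul]

theorem natCast_mul_fejerKernel_mul_sin_half_sq (N : ℕ) (k : ℝ) :
    N * fejerKernel N k * sin (k / 2) ^ 2 = sin (N * k / 2) ^ 2 := by
  rw [natCast_mul_fejerKernel, sum_sub_abs_mul_cos_mul_sin_half_sq]

theorem fejerKernel_nonneg (N : ℕ) : 0 ≤ fejerKernel N := by
  intro k
  by_cases hsin : sin (k / 2) = 0
  · obtain ⟨n, hn⟩ := sin_eq_zero_iff.mp hsin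
    refine Finset.sum_nonneg fun l hl ↦ mul_nonneg (sub_nonneg.mpr ?_) ?_
    · rw [Finset.mem_Icc] at hl
      have habs : |(l : ℝ)| ≤ N := by exact_mod_cast (by grind : |l| ≤ N)
      exact div_le_one_of_le₀ habs N.cast_nonneg
    · have hperiod : l * k = (l * n : ℤ) * (2 * π) := by
        push_cast
        linear_combination -2 * l * hn
      rw [hperiod, cos_int_mul_two_pi]
      exact zero_le_one
  · obtain rfl | hN := N.eq_zero_or_pos
    · simp [fejerKernel]
    · refine nonneg_of_mul_nonneg_right (a := N * sin (k / 2) ^ 2) ?_ (by positivity)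
      rw [mul_right_comm, natCast_mul_fejerKernel_mul_sin_half_sq]
      positivity

theorem natCast_mul_sq_mul_fejerKernel_le (N : ℕ) {k : ℝ} (hk : |k| ≤ π) :
    N * k ^ 2 * fejerKernel N k ≤ π ^ 2 := by
  have hF : 0 ≤ fejerKernel N k := fejerKernel_nonneg N k
  calc N * k ^ 2 * fejerKernel N k
      ≤ N * (π ^ 2 * sin (k / 2) ^ 2) * fejerKernel N k := by
        gcongr
        exact sq_le_pi_sq_mul_sin_half_sq hk
    _ = π ^ 2 * sin (N * k / 2) ^ 2 := by
        rw [← natCast_mul_fejerKernel_mul_sin_half_sq]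
        ring
    _ ≤ π ^ 2 := mul_le_of_le_one_right (sq_nonneg π) (sin_sq_le_one _)

theorem integral_fejerKernel {N : ℕ} (hN : 1 ≤ N) : ∫ k in (-π)..π, fejerKernel N k = 2 * π := by
  have hint (l : ℤ) (hl : l ≠ 0) : ∫ k in (-π)..π, cos (l * k) = 0 := by
    rw [intervalIntegral.integral_comp_mul_left _ (Int.cast_ne_zero.mpr hl)]
    simp [sin_int_mul_pi]
  unfold fejerKernel
  rw [intervalIntegral.integral_finsetSum fun l _ ↦
    Continuous.intervalIntegrable (by fun_prop) _ _]
  simp_rw [intervalIntegral.integral_const_mul]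
  rw [Finset.sum_eq_single_of_mem 0 (by rw [Finset.mem_Icc]; lia)
    fun l _ hl ↦ by rw [hint l hl, mul_zero]]
  simp [two_mul]

theorem integral_fejerKernel_le {N : ℕ} (hN : 1 ≤ N) {δ : ℝ} (hδ : 0 < δ) (hδπ : δ ≤ π) :
    ∫ k in δ..π, fejerKernel N k ≤ π ^ 2 / (N * δ) := by
  have hzero : (0 : ℝ) ∉ uIcc δ π := by
    rw [uIcc_of_le hδπ]
    exact fun h ↦ hδ.not_ge h.1
  have hdecay : ∀ k ∈ Icc δ π, fejerKernel N k ≤ π ^ 2 / N * k ^ (-2 : ℤ) := by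
    rintro k ⟨hδk, hkπ⟩
    have hk : 0 < k := hδ.trans_le hδk
    have hle := natCast_mul_sq_mul_fejerKernel_le N (abs_le.mpr ⟨by linarith, hkπ⟩)
    rw [zpow_neg, ← div_eq_mul_inv, div_div, le_div_iff₀ (by positivity), mul_comm]
    exact_mod_cast hle
  calc ∫ k in δ..π, fejerKernel N k ≤ ∫ k in δ..π, π ^ 2 / N * k ^ (-2 : ℤ) :=
        intervalIntegral.integral_mono_on hδπ
          ((continuous_fejerKernel N).intervalIntegrable _ _)
          ((intervalIntegral.intervalIntegrable_zpow (.inr hzero)).const_mul _) hdecay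
    _ = π ^ 2 / N * (δ⁻¹ - π⁻¹) := by
        rw [intervalIntegral.integral_const_mul, integral_zpow (.inr ⟨by norm_num, hzero⟩),
          (by norm_num : (-2 : ℤ) + 1 = -1), zpow_neg_one, zpow_neg_one]
        push_cast
        ring
    _ ≤ π ^ 2 / N * δ⁻¹ := by
        gcongr
        exact sub_le_self _ (inv_nonneg.mpr pi_nonneg)
    _ = π ^ 2 / (N * δ) := by rw [← div_eq_mul_inv, div_div]

theorem setIntegral_fejerKernel_tails_le {N : ℕ} (hN : 1 ≤ N) {δ : ℝ} (hδ : 0 < δ)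
    (hδπ : δ ≤ π) :
    ∫ k in Ioc (-π) (-δ) ∪ Ioc δ π, fejerKernel N k ≤ 2 * π ^ 2 / (N * δ) := by
  have hdisj : Disjoint (Ioc (-π) (-δ)) (Ioc δ π) :=
    disjoint_left.mpr fun k hleft hright ↦ by linarith [hleft.2, hright.1]
  have hsymm : ∫ k in (-π)..(-δ), fejerKernel N k = ∫ k in δ..π, fejerKernel N k := by
    simp only [← intervalIntegral.integral_comp_neg, fejerKernel_neg]
  have hint (a b : ℝ) : IntegrableOn (fejerKernel N) (Ioc a b) :=
    ((continuous_fejerKernel N).integrableOn_Icc).mono_set Ioc_subset_Icc_self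
  rw [setIntegral_union hdisj measurableSet_Ioc (hint _ _) (hint _ _),
    ← intervalIntegral.integral_of_le (neg_le_neg hδπ), ← intervalIntegral.integral_of_le hδπ,
    hsymm, ← two_mul, mul_div_assoc]
  exact mul_le_mul_of_nonneg_left (integral_fejerKernel_le hN hδ hδπ) zero_le_two

section FejerMean

variable {E : Type*} [NormedAddCommGroup E] [NormedSpace ℝ E]

/-- The Fejér mean of order `N` of a vector-valued curve at the parameter `0`, that is, its average
over `[-π, π]` against the Fejér kernel. For `f = fun k ↦ η k b` this is the Fejér approximant
`b_N`. -/
noncomputable def fejerMean (N : ℕ) (f : ℝ → E) : E :=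
  (2 * π)⁻¹ • ∫ k in (-π)..π, fejerKernel N k • f k

variable [CompleteSpace E] {N : ℕ} {f : ℝ → E}

theorem sub_fejerMean (hN : 1 ≤ N) (hf : IntervalIntegrable f volume (-π) π) (x : E) :
    x - fejerMean N f = (2 * π)⁻¹ • ∫ k in (-π)..π, fejerKernel N k • (x - f k) := by
  have hF : ContinuousOn (fejerKernel N) (uIcc (-π) π) := (continuous_fejerKernel N).continuousOn
  simp_rw [smul_sub]
  rw [intervalIntegral.integral_sub (intervalIntegrable_const.continuousOn_smul hF)
    (hf.continuousOn_smul hF), intervalIntegral.integral_smul_const, integral_fejerKernel hN,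
    smul_sub, inv_smul_smul₀ two_pi_pos.ne', fejerMean]

theorem norm_sub_fejerMean_le (hN : 1 ≤ N) (hf : IntervalIntegrable f volume (-π) π) {x : E}
    {δ ε B : ℝ} (hδ : 0 < δ) (hδπ : δ ≤ π) (hnear : ∀ k ∈ Icc (-δ) δ, ‖x - f k‖ ≤ ε)
    (hfar : ∀ k ∈ Icc (-π) π, ‖x - f k‖ ≤ B) :
    ‖x - fejerMean N f‖ ≤ ε + B * (π / (N * δ)) := by
  have hε : 0 ≤ ε := (norm_nonneg _).trans (hnear 0 ⟨by linarith, hδ.le⟩)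
  have hB : 0 ≤ B := (norm_nonneg _).trans (hfar 0 ⟨by linarith, pi_nonneg⟩)
  have hle : -π ≤ π := by linarith
  let tails : Set ℝ := Ioc (-π) (-δ) ∪ Ioc δ π
  have htails_meas : MeasurableSet tails := measurableSet_Ioc.union measurableSet_Ioc
  have htails_subset : tails ⊆ Ioc (-π) π :=
    union_subset (Ioc_subset_Ioc_right (by linarith)) (Ioc_subset_Ioc_left (by linarith))
  have hnear_ae : ∀ᵐ k ∂volume.restrict (Ioc (-π) π), k ∉ tails → ‖x - f k‖ ≤ ε :=
    ae_restrict_of_forall_mem measurableSet_Ioc fun k hk hk_tails ↦ hnear k (by grind)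
  have hfar_ae : ∀ᵐ k ∂volume.restrict (Ioc (-π) π), k ∈ tails → ‖x - f k‖ ≤ B :=
    ae_restrict_of_forall_mem measurableSet_Ioc fun k hk _ ↦ hfar k (Ioc_subset_Icc_self hk)
  have hintegral : ‖∫ k in (-π)..π, fejerKernel N k • (x - f k)‖ ≤
      ε * (2 * π) + B * ∫ k in tails, fejerKernel N k := by
    have := norm_integral_smul_le_add_setIntegral htails_meas
      ((continuous_fejerKernel N).intervalIntegrable (-π) π).1
      (.of_forall (fejerKernel_nonneg N)) hε hnear_ae hfar_ae
    rwa [Measure.restrict_restrict_of_subset htails_subset,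
      ← intervalIntegral.integral_of_le hle, ← intervalIntegral.integral_of_le hle,
      integral_fejerKernel hN] at this
  calc ‖x - fejerMean N f‖ = (2 * π)⁻¹ * ‖∫ k in (-π)..π, fejerKernel N k • (x - f k)‖ := by
        rw [sub_fejerMean hN hf, norm_smul, norm_of_nonneg (by positivity)]
    _ ≤ (2 * π)⁻¹ * (ε * (2 * π) + B * (2 * π ^ 2 / (N * δ))) := by
        gcongr
        exact hintegral.trans (by gcongr; exact setIntegral_fejerKernel_tails_le hN hδ hδπ)
    _ = ε + B * (π / (N * δ)) := by field_simp

theorem norm_sub_fejer_approximant_le_general (hN : 1 ≤ N) {C : ℝ≥0} {M : ℝ}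
    (hlip : LipschitzOnWith C f (Icc (-π) π)) (hbound : ∀ k ∈ Icc (-π) π, ‖f k‖ ≤ M) :
    ‖f 0 - fejerMean N f‖ ≤ π / √N * C + 2 / √N * M := by
  have hsqrt : 1 ≤ √(N : ℝ) := one_le_sqrt.mpr (by exact_mod_cast hN)
  have hδ : 0 < π / √N := by positivity
  have hδπ : π / √N ≤ π := div_le_self pi_nonneg hsqrt
  have hzero : (0 : ℝ) ∈ Icc (-π) π := ⟨by linarith [pi_pos], pi_nonneg⟩
  have hf : IntervalIntegrable f volume (-π) π :=
    hlip.continuousOn.intervalIntegrable_of_Icc (hzero.1.trans hzero.2)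
  have hnear : ∀ k ∈ Icc (-(π / √N)) (π / √N), ‖f 0 - f k‖ ≤ C * (π / √N) := by
    intro k hk
    refine (hlip.norm_sub_le hzero (Icc_subset_Icc (neg_le_neg hδπ) hδπ hk)).trans ?_
    rw [zero_sub, norm_neg]
    exact mul_le_mul_of_nonneg_left (abs_le.mpr hk) C.coe_nonneg
  have hfar : ∀ k ∈ Icc (-π) π, ‖f 0 - f k‖ ≤ 2 * M := fun k hk ↦ by
    rw [two_mul]
    exact norm_sub_le_of_le (hbound 0 hzero) (hbound k hk)
  calc ‖f 0 - fejerMean N f‖ ≤ C * (π / √N) + 2 * M * (π / (N * (π / √N))) :=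
        norm_sub_fejerMean_le hN hf hδ hδπ hnear hfar
    _ = π / √N * C + 2 / √N * M := by
        have hsq : √(N : ℝ) ^ 2 = N := sq_sqrt N.cast_nonneg
        field_simp
        rw [hsq]
        ring

end FejerMean

/-- for a `2π`-periodic norm-continuous one-parameter group `η` of
*-automorphisms of a complex C*-algebra `A`, elements `b, c ∈ A` with
`d/dk (η k b) = η p c` at every `p` (so `c = ∂b`), and `N ≥ 1`, the Fejér approximant
`b_N = (2π)⁻¹ ∫_{-π}^{π} F_N(k) η_k(b) dk` (where `F_N` is the Fejér kernel) satisfies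
`‖b - b_N‖ ≤ (π/√N) ‖c‖ + (2/√N) ‖b‖`. -/
theorem norm_sub_fejer_approximant_le {A : Type*} [NormedRing A] [StarRing A] [CStarRing A]
    [NormedAlgebra ℂ A] [StarModule ℂ A] [CompleteSpace A]
    (η : ℝ → (A ≃⋆ₐ[ℂ] A))
    (hgrp : ∀ (k k' : ℝ) (a : A), η (k + k') a = η k (η k' a))
    (hper : ∀ k : ℝ, η (k + 2 * Real.pi) = η k)
    (hcont : ∀ a : A, Continuous fun k : ℝ => η k a)
    (b c : A)
    (hderiv : ∀ p : ℝ, HasDerivAt (fun k : ℝ => η k b) (η p c) p)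
    (N : ℕ) (hN : 1 ≤ N) :
    ‖b - (2 * Real.pi)⁻¹ •
        ∫ k in (-Real.pi)..Real.pi,
          (∑ l ∈ Finset.Icc (-(N : ℤ) + 1) ((N : ℤ) - 1),
            (1 - |(l : ℝ)| / (N : ℝ)) * Real.cos ((l : ℝ) * k)) • η k b‖ ≤
      (Real.pi / Real.sqrt N) * ‖c‖ + (2 / Real.sqrt N) * ‖b‖ := by
  let _ : CStarAlgebra A := {}
  have hzero : η 0 b = b := EquivLike.injective (η 0) (by rw [← hgrp, add_zero])
  have hlip : LipschitzOnWith ‖c‖₊ (fun k ↦ η k b) (Icc (-π) π) :=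
    (convex_Icc _ _).lipschitzOnWith_of_nnnorm_hasDerivWithin_le
      (fun p _ ↦ (hderiv p).hasDerivWithinAt) fun p _ ↦ (StarAlgEquiv.nnnorm_map (η p) c).le
  simpa only [hzero, fejerMean, fejerKernel, coe_nnnorm] using
    norm_sub_fejer_approximant_le_general hN hlip fun k _ ↦ (StarAlgEquiv.norm_map (η k) b).le
end
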